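/- arXiv:math/0303154 — 8 statements merged into one kernel-verified Lean document; each statement's English description precedes it below -/
import Mathlib

section
/- Let F = ∑_{n∈ℤ} f_{n+1/2}(q) t^{n+1/2} be a formal series with all coefficients f_{n+1/2} ∈ ℂ((q)), and suppose F satisfies F(qt) + q^{1/2} t F(t) = 0, i.e. q^n f_{n+1/2}(q) = − f_{n−1/2}(q) in ℂ((q)) for every n ∈ ℤ. Then f_{n+1/2}(q) = (−1)^n q^{−n(n+1)/2} f_{1/2}(q) for every n ∈ ℤ; that is, F = f(q) · ∑_{n∈ℤ} (−1)^n q^{−n(n+1)/2} t^{n+1/2} with f = f_{1/2} ∈ ℂ((q)). In particular, if every coefficient f_{n+1/2} lies in ℂ[[q]], then F = 0. (Lemma A.2 of the paper.) -/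
/-- **Lemma A.2.**  A formal series `F = ∑_{n ∈ ℤ} f_{n+1/2}(q) t^{n+1/2}` (encoded by the
family of coefficients `f n := f_{n+1/2} ∈ ℂ((q))`) satisfying
`F(qt) + q^{1/2} t F(t) = 0`, i.e. `q^n f_{n+1/2} = - f_{n-1/2}` for all `n ∈ ℤ`,
has `f_{n+1/2} = (-1)^n q^{-n(n+1)/2} f_{1/2}` for every `n`; in particular if all the
coefficients lie in `ℂ[[q]]` then `F = 0`. -/
theorem stmt1 (f : ℤ → LaurentSeries ℂ)
    (h : ∀ n : ℤ, (HahnSeries.single n (1 : ℂ) : LaurentSeries ℂ) * f n = - f (n - 1)) :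
    (∀ n : ℤ,
        f n = (HahnSeries.single (-(n * (n + 1) / 2)) ((-1 : ℂ) ^ n) : LaurentSeries ℂ) * f 0) ∧
    ((∀ n : ℤ, ∃ g : PowerSeries ℂ, f n = (g : LaurentSeries ℂ)) → ∀ n : ℤ, f n = 0) := by
  have hT : ∀ n : ℤ, n * (n + 1) / 2 = (n - 1) * (n - 1 + 1) / 2 + n := by
    intro n
    rw [← Int.add_mul_ediv_right _ _ (by norm_num : (2 : ℤ) ≠ 0)]
    congr 1
    ring
  have hone : (HahnSeries.single (0 : ℤ) (1 : ℂ) : LaurentSeries ℂ) = 1 := rfl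
  have hdown : ∀ n : ℤ, f (n - 1) = HahnSeries.single n (-1 : ℂ) * f n := by
    intro n
    ext k
    have e := congrArg (fun x : LaurentSeries ℂ => x.coeff k) (h n)
    simp only [HahnSeries.coeff_single_mul, HahnSeries.coeff_neg, one_mul] at e
    rw [HahnSeries.coeff_single_mul, e]
    ring
  have hup : ∀ n : ℤ, f n = HahnSeries.single (-n) (-1 : ℂ) * f (n - 1) := by
    intro n
    rw [hdown n, ← mul_assoc, HahnSeries.single_mul_single]
    simp [hone]
  have main : ∀ n : ℤ,
      f n = (HahnSeries.single (-(n * (n + 1) / 2)) ((-1 : ℂ) ^ n) : LaurentSeries ℂ) * f 0 := by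
    intro n
    induction n using Int.induction_on with
    | zero => simp [hone]
    | succ k ih =>
      rw [hup, hT, add_sub_cancel_right, ih, ← mul_assoc, HahnSeries.single_mul_single,
        zpow_add₀ (by norm_num), zpow_one, mul_comm (-1 : ℂ)]
      congr 3
      ring
    | pred k ih =>
      rw [hdown, ih, ← mul_assoc, HahnSeries.single_mul_single, hT (-(k : ℤ)),
        zpow_sub₀ (by norm_num), zpow_one]
      congr 2
      · congr 1
        ring
      · ring
  refine ⟨main, fun hg => ?_⟩
  have h0 : f 0 = 0 := by
    ext k
    obtain ⟨n, hn⟩ : ∃ n : ℤ, k - n * (n + 1) / 2 < 0 := by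
      refine ⟨|k| + 1, ?_⟩
      have h1 : |k| + 1 ≤ (|k| + 1) * (|k| + 1 + 1) / 2 := by
        rw [Int.le_ediv_iff_mul_le (by norm_num)]
        nlinarith [abs_nonneg k]
      have := le_abs_self k
      omega
    obtain ⟨g, hgn⟩ := hg n
    have e := congrArg (fun x : LaurentSeries ℂ => x.coeff (k + -(n * (n + 1) / 2))) (main n)
    simp only [HahnSeries.coeff_single_mul_add] at e
    rw [hgn, PowerSeries.coeff_coe, if_pos (by omega)] at e
    have hz : ((-1 : ℂ) ^ n) ≠ 0 := zpow_ne_zero _ (by norm_num)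
    simpa [hz] using e.symm
  intro n
  rw [main n, h0, mul_zero]
end

section
/- Let F = ∑_{m,l∈ℤ} a_{m,l}(q) t₁^{m+1/2} t₂^{l+1/2} be a formal series with all coefficients a_{m,l} ∈ ℂ((q)), and suppose F satisfies F(qt₁, t₂) + q^{1/2} t₁ t₂ F(t₁, t₂) = 0, i.e. q^m a_{m,l}(q) = − a_{m−1,l−1}(q) in ℂ((q)) for all m, l ∈ ℤ, together with the symmetry a_{m,l} = a_{l,m} for all m, l. Then a_{m,l} = 0 whenever m ≠ l, and a_{n,n}(q) = (−1)^n q^{−n(n+1)/2} a_{0,0}(q) for every n ∈ ℤ; that is, F = f(q) · ∑_{n∈ℤ} (−1)^n q^{−n(n+1)/2} (t₁t₂)^{n+1/2} with f = a_{0,0} ∈ ℂ((q)). In particular, if every coefficient a_{m,l} lies in ℂ[[q]], then F = 0. (Lemma A.4 of the paper.) -/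
/-- **Lemma A.4.**  A formal series `F = ∑_{m,l ∈ ℤ} a_{m,l}(q) t₁^{m+1/2} t₂^{l+1/2}` with
coefficients `a_{m,l} ∈ ℂ((q))` satisfying `F(qt₁,t₂) + q^{1/2} t₁ t₂ F(t₁,t₂) = 0`
(coefficientwise: `q^m a_{m,l} = - a_{m-1,l-1}`) together with the symmetry
`a_{m,l} = a_{l,m}`, satisfies `a_{m,l} = 0` for `m ≠ l` and
`a_{n,n} = (-1)^n q^{-n(n+1)/2} a_{0,0}`; in particular if all coefficients lie in
`ℂ[[q]]` then `F = 0`. -/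
theorem stmt3 (a : ℤ → ℤ → LaurentSeries ℂ)
    (h : ∀ m l : ℤ,
      (HahnSeries.single m (1 : ℂ) : LaurentSeries ℂ) * a m l = - a (m - 1) (l - 1))
    (hsym : ∀ m l : ℤ, a m l = a l m) :
    (∀ m l : ℤ, m ≠ l → a m l = 0) ∧
    (∀ n : ℤ,
      a n n = (HahnSeries.single (-(n * (n + 1) / 2)) ((-1 : ℂ) ^ n) : LaurentSeries ℂ) * a 0 0) ∧
    ((∀ m l : ℤ, ∃ g : PowerSeries ℂ, a m l = (g : LaurentSeries ℂ)) → ∀ m l : ℤ, a m l = 0) := by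
  have hoff : ∀ m l : ℤ, m ≠ l → a m l = 0 := by
    intro m l hml
    have h1 := h m l
    have h2 := h l m
    rw [hsym l m, hsym (l - 1) (m - 1), ← h1] at h2
    by_contra h0
    have h3 := mul_right_cancel₀ h0 h2
    have h4 := congrArg (fun x : LaurentSeries ℂ => HahnSeries.coeff x m) h3
    simp [HahnSeries.coeff_single_of_ne hml] at h4
  have hdiag : ∀ n : ℤ, a n n =
      (HahnSeries.single (-(n * (n + 1) / 2)) ((-1 : ℂ) ^ n) : LaurentSeries ℂ) * a 0 0 := by
    have hdown : ∀ n : ℤ, a (n - 1) (n - 1) =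
        (HahnSeries.single n (-1 : ℂ) : LaurentSeries ℂ) * a n n := by
      intro n
      have h1 : a (n - 1) (n - 1) = -((HahnSeries.single n (1 : ℂ) : LaurentSeries ℂ) * a n n) := by
        rw [h n n, neg_neg]
      have h2 : (HahnSeries.single n (-1 : ℂ) : LaurentSeries ℂ) =
          -(HahnSeries.single n (1 : ℂ) : LaurentSeries ℂ) := HahnSeries.single_neg _ _
      rw [h1, h2]
      exact (neg_mul (HahnSeries.single n (1 : ℂ) : LaurentSeries ℂ) (a n n)).symm
    have hup : ∀ n : ℤ, a n n =
        (HahnSeries.single (-n) (-1 : ℂ) : LaurentSeries ℂ) * a (n - 1) (n - 1) := by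
      intro n
      rw [hdown, ← mul_assoc, HahnSeries.single_mul_single]
      simp
    have htri : ∀ n : ℤ, (n + 1) * (n + 1 + 1) / 2 = n * (n + 1) / 2 + (n + 1) := by
      intro n
      have : (n + 1) * (n + 1 + 1) = n * (n + 1) + (n + 1) * 2 := by ring
      rw [this, Int.add_mul_ediv_right _ _ (by norm_num)]
    intro n
    induction n using Int.induction_on with
    | zero => simp
    | succ i ih =>
      rw [hup, add_sub_cancel_right, ih, ← mul_assoc, HahnSeries.single_mul_single, htri,
        zpow_add_one₀ (by norm_num)]
      rw [mul_comm (-1 : ℂ), ← neg_add, add_comm]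
    | pred i ih =>
      have ht := htri (-i - 1)
      rw [sub_add_cancel] at ht
      rw [hdown, ih, ← mul_assoc, HahnSeries.single_mul_single, ht, zpow_sub_one₀ (by norm_num),
        sub_add_cancel, mul_comm (-1 : ℂ), inv_neg_one]
      congr 3
      ring
  refine ⟨hoff, hdiag, ?_⟩
  intro hp
  have h00 : a 0 0 = 0 := by
    ext k
    obtain ⟨g, hg⟩ := hp (|k| + 1) (|k| + 1)
    have h1 := hdiag (|k| + 1)
    set n : ℤ := |k| + 1 with hn
    have h2 : (a n n).coeff (k + -(n * (n + 1) / 2)) = (-1 : ℂ) ^ n * (a 0 0).coeff k := by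
      rw [h1, HahnSeries.coeff_single_mul_add]
    have h3 : k + -(n * (n + 1) / 2) < 0 := by
      have hk := le_abs_self k
      have hk0 := abs_nonneg k
      have : n ≤ n * (n + 1) / 2 := by
        rw [Int.le_ediv_iff_mul_le (by norm_num)]
        nlinarith
      omega
    rw [hg, PowerSeries.coeff_coe, if_pos h3] at h2
    have h4 : ((-1 : ℂ) ^ n) ≠ 0 := zpow_ne_zero _ (by norm_num)
    simpa [h4] using h2.symm
  intro m l
  by_cases hml : m = l
  · subst hml
    rw [hdiag, h00, mul_zero]
  · exact hoff m l hml
end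

section
/- Let k ≥ 1 be an integer and q ∈ ℂ with 0 < |q| < 1. Then the incomplete theta function A_k(q) = ∑_{m=0}^∞ (−1)^m q^{(m+1−2k)(m+2)/2} (an absolutely convergent series of complex numbers) satisfies A_k(q) = q^{−k} + ∑_{m=0}^∞ (−1)^{m+1} q^{m(m+2k+1)/2}, the series on the right also converging absolutely. In particular A_k(q) − q^{−k} extends to a function of q holomorphic on the open unit disc. -/
lemma aux_exp (k m : ℕ) : ((m : ℤ) * ((m : ℤ) + 2 * k + 1)) / 2 = ((m * (m + 2 * k + 1) / 2 : ℕ) : ℤ) := by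
  push_cast
  rfl

lemma aux_ge (k m : ℕ) (hk : 1 ≤ k) : m ≤ m * (m + 2 * k + 1) / 2 := by
  rw [Nat.le_div_iff_mul_le (by norm_num)]
  exact Nat.mul_le_mul_left _ (by omega)

lemma aux_bound (k m : ℕ) (hk : 1 ≤ k) (q : ℂ) (r : ℝ) (hr : ‖q‖ ≤ r) (h1 : r < 1) :
    ‖(-1 : ℂ) ^ (m + 1) * q ^ (m * (m + 2 * k + 1) / 2)‖ ≤ r ^ m := by
  rw [norm_mul, norm_pow, norm_pow, norm_neg, norm_one, one_pow, one_mul]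
  calc ‖q‖ ^ (m * (m + 2 * k + 1) / 2) ≤ ‖q‖ ^ m :=
        pow_le_pow_of_le_one (norm_nonneg _) (by linarith) (aux_ge k m hk)
    _ ≤ r ^ m := pow_le_pow_left₀ (norm_nonneg _) hr m

lemma aux_diff (k : ℕ) (hk : 1 ≤ k) : DifferentiableOn ℂ
    (fun q : ℂ => ∑' m : ℕ, (-1 : ℂ) ^ (m + 1) * q ^ (m * (m + 2 * k + 1) / 2))
    (Metric.ball (0 : ℂ) 1) := by
  intro q hq
  rw [mem_ball_zero_iff] at hq
  obtain ⟨r, hr, hr1⟩ := exists_between hq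
  have h0 : 0 ≤ r := (norm_nonneg q).trans hr.le
  have h := Complex.differentiableOn_tsum_of_summable_norm
    (F := fun (m : ℕ) (q : ℂ) => (-1 : ℂ) ^ (m + 1) * q ^ (m * (m + 2 * k + 1) / 2))
    (U := Metric.ball (0 : ℂ) r) (summable_geometric_of_lt_one h0 hr1)
    (fun m => by fun_prop) Metric.isOpen_ball
    (fun m w hw => aux_bound k m hk w r (mem_ball_zero_iff.1 hw).le hr1)
  exact (h.differentiableAt (Metric.isOpen_ball.mem_nhds (mem_ball_zero_iff.2 hr))).differentiableWithinAt

lemma aux_tail (k m : ℕ) (hk : 1 ≤ k) (q : ℂ) :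
    (-1 : ℂ) ^ (m + (2 * k - 1)) * q ^ (((((m + (2 * k - 1) : ℕ) : ℤ) + 1 - 2 * k) * (((m + (2 * k - 1) : ℕ) : ℤ) + 2)) / 2)
    = (-1 : ℂ) ^ (m + 1) * q ^ (((m : ℤ) * ((m : ℤ) + 2 * k + 1)) / 2) := by
  obtain ⟨n, rfl⟩ : ∃ n, k = n + 1 := ⟨k - 1, by omega⟩
  have e : m + (2 * (n + 1) - 1) = (m + 1) + 2 * n := by omega
  rw [e, pow_add, pow_mul]
  congr 1
  · simp
  · congr 1
    push_cast
    congr 1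
    ring

lemma aux_head (k : ℕ) (hk : 1 ≤ k) (q : ℂ) :
    ∑ m ∈ Finset.range (2 * k - 1), (-1 : ℂ) ^ m * q ^ ((((m : ℤ) + 1 - 2 * k) * ((m : ℤ) + 2)) / 2)
     = q ^ (-(k : ℤ)) := by
  obtain ⟨n, rfl⟩ : ∃ n, k = n + 1 := ⟨k - 1, by omega⟩
  have e : 2 * (n + 1) - 1 = 2 * n + 1 := by omega
  rw [e, Finset.sum_range_succ]
  have h0 : ∑ m ∈ Finset.range (2 * n), (-1 : ℂ) ^ m * q ^ ((((m : ℤ) + 1 - 2 * (n + 1 : ℕ)) * ((m : ℤ) + 2)) / 2) = 0 := by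
    rw [← self_eq_neg]
    conv_lhs => rw [← Finset.sum_range_reflect]
    rw [← Finset.sum_neg_distrib]
    refine Finset.sum_congr rfl fun m hm => ?_
    rw [Finset.mem_range] at hm
    have c : ((2 * n - 1 - m : ℕ) : ℤ) = 2 * n - 1 - m := by omega
    rw [c, ← neg_mul]
    congr 1
    · have : (-1 : ℂ) ^ (2 * n - 1 - m) * (-1) ^ (m + 1) = 1 := by
        rw [← pow_add, show 2 * n - 1 - m + (m + 1) = 2 * n by omega, pow_mul]; simp
      have h2 : (-1 : ℂ) ^ m * (-1) ^ m = 1 := by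
        rw [← mul_pow]; simp
      rw [pow_succ] at this
      linear_combination (-(-1 : ℂ) ^ m) * this - (-1 : ℂ) ^ (2 * n - 1 - m) * h2
    · congr 2
      push_cast
      ring
  rw [h0, zero_add, pow_mul]
  have : (((2 * n : ℕ) : ℤ) + 1 - 2 * (n + 1 : ℕ)) * (((2 * n : ℕ) : ℤ) + 2) / 2 = -((n + 1 : ℕ) : ℤ) := by
    apply Int.ediv_eq_of_eq_mul_left (by norm_num)
    push_cast
    ring
  rw [this]
  simp

lemma aux_main (k : ℕ) (hk : 1 ≤ k) (q : ℂ) (h1 : ‖q‖ < 1) :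
      (Summable fun m : ℕ =>
        ‖(-1 : ℂ) ^ m * q ^ ((((m : ℤ) + 1 - 2 * k) * ((m : ℤ) + 2)) / 2)‖) ∧
      (Summable fun m : ℕ =>
        ‖(-1 : ℂ) ^ (m + 1) * q ^ (((m : ℤ) * ((m : ℤ) + 2 * k + 1)) / 2)‖) ∧
      (∑' m : ℕ, (-1 : ℂ) ^ m * q ^ ((((m : ℤ) + 1 - 2 * k) * ((m : ℤ) + 2)) / 2))
        = q ^ (-(k : ℤ)) +
          ∑' m : ℕ, (-1 : ℂ) ^ (m + 1) * q ^ (((m : ℤ) * ((m : ℤ) + 2 * k + 1)) / 2) := by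
  have hR : Summable fun m : ℕ =>
        ‖(-1 : ℂ) ^ (m + 1) * q ^ (((m : ℤ) * ((m : ℤ) + 2 * k + 1)) / 2)‖ := by
    refine Summable.of_nonneg_of_le (fun _ => norm_nonneg _) (fun m => ?_)
      (summable_geometric_of_lt_one (norm_nonneg q) h1)
    rw [aux_exp, zpow_natCast]
    exact aux_bound k m hk q _ le_rfl h1
  have hL : Summable fun m : ℕ =>
        ‖(-1 : ℂ) ^ m * q ^ ((((m : ℤ) + 1 - 2 * k) * ((m : ℤ) + 2)) / 2)‖ := by
    rw [← summable_nat_add_iff (2 * k - 1)]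
    simp only [aux_tail k _ hk q]
    exact hR
  refine ⟨hL, hR, ?_⟩
  rw [← hL.of_norm.sum_add_tsum_nat_add (2 * k - 1), aux_head k hk q]
  simp only [aux_tail k _ hk q]

/-- **Incomplete theta functions.**  For an integer `k ≥ 1` and `q ∈ ℂ` with `0 < |q| < 1`,
the series `A_k(q) = ∑_{m≥0} (-1)^m q^{(m+1-2k)(m+2)/2}` converges absolutely and
`A_k(q) = q^{-k} + ∑_{m≥0} (-1)^{m+1} q^{m(m+2k+1)/2}`, the right-hand series also
converging absolutely; in particular `A_k(q) - q^{-k}` extends to a holomorphic function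
on the open unit disc. -/
theorem stmt6 (k : ℕ) (hk : 1 ≤ k) :
    (∀ q : ℂ, 0 < ‖q‖ → ‖q‖ < 1 →
      (Summable fun m : ℕ =>
        ‖(-1 : ℂ) ^ m * q ^ ((((m : ℤ) + 1 - 2 * k) * ((m : ℤ) + 2)) / 2)‖) ∧
      (Summable fun m : ℕ =>
        ‖(-1 : ℂ) ^ (m + 1) * q ^ (((m : ℤ) * ((m : ℤ) + 2 * k + 1)) / 2)‖) ∧
      (∑' m : ℕ, (-1 : ℂ) ^ m * q ^ ((((m : ℤ) + 1 - 2 * k) * ((m : ℤ) + 2)) / 2))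
        = q ^ (-(k : ℤ)) +
          ∑' m : ℕ, (-1 : ℂ) ^ (m + 1) * q ^ (((m : ℤ) * ((m : ℤ) + 2 * k + 1)) / 2)) ∧
    ∃ g : ℂ → ℂ, DifferentiableOn ℂ g (Metric.ball (0 : ℂ) 1) ∧
      ∀ q : ℂ, 0 < ‖q‖ → ‖q‖ < 1 →
        (∑' m : ℕ, (-1 : ℂ) ^ m * q ^ ((((m : ℤ) + 1 - 2 * k) * ((m : ℤ) + 2)) / 2))
          - q ^ (-(k : ℤ)) = g q := by
  refine ⟨fun q _ h1 => aux_main k hk q h1, _, aux_diff k hk, fun q _ h1 => ?_⟩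
  rw [(aux_main k hk q h1).2.2, add_sub_cancel_left]
  simp only [aux_exp, zpow_natCast]
end

section
/- Let q, t ∈ ℂ with 0 < |q| < 1 and 1 < |t| < 1/|q|. Then ∑_{m=0}^∞ (−1)^m q^{m(m+1)/2} (1 − q^{2m+1}) / ( (1 − t^{−1} q^m)(1 − t q^{m+1}) ) = (q)_∞² / ( (1 − t^{−1}) · ∏_{i=1}^∞ (1 − q^i t)(1 − q^i t^{−1}) ) = t/Θ(t), all series and products converging absolutely. Equivalently, the reciprocal 1/θ₁₁(t) of the theta function θ₁₁(t) = t^{−1/2}Θ(t) equals t^{−1/2} times the left-hand sum. -/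
/-- `(q)_∞ = ∏_{i=1}^∞ (1 - q^i)`. -/
noncomputable def Qinf (q : ℂ) : ℂ := ∏' i : ℕ, (1 - q ^ (i + 1))

/-- `Θ(u) = (u-1) ∏_{i=1}^∞ (1-q^i u)(1-q^i u⁻¹) / (q)_∞²`; in terms of the paper's theta
function, `θ₁₁(u) = u^{-1/2} Θ(u)`. -/
noncomputable def Theta (q u : ℂ) : ℂ :=
  (u - 1) * (∏' i : ℕ, (1 - q ^ (i + 1) * u) * (1 - q ^ (i + 1) * u⁻¹)) / (Qinf q) ^ 2

open Filter Topology Finset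

lemma aux_fac_ne {q c : ℂ} (hq1 : ‖q‖ < 1) (hc : ‖q * c‖ < 1) (i : ℕ) :
    1 - q ^ (i + 1) * c ≠ 0 := by
  intro h
  have h1 : q ^ (i + 1) * c = 1 := (sub_eq_zero.mp h).symm
  have h2 : ‖q ^ (i + 1) * c‖ < 1 := by
    rw [pow_succ, mul_assoc, norm_mul, norm_pow]
    calc ‖q‖ ^ i * ‖q * c‖ ≤ 1 * ‖q * c‖ := by
          gcongr
          exact pow_le_one₀ (norm_nonneg _) hq1.le
      _ < 1 := by simpa using hc
  rw [h1] at h2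
  simp at h2

lemma aux_summable {q : ℂ} (hq1 : ‖q‖ < 1) (c : ℂ) :
    Summable fun i : ℕ => ‖-(q ^ (i + 1) * c)‖ := by
  have := ((summable_nat_add_iff 1).mpr
    (summable_geometric_of_lt_one (norm_nonneg q) hq1)).mul_right ‖c‖
  simpa using this

lemma aux_mult {q : ℂ} (hq1 : ‖q‖ < 1) (c : ℂ) :
    Multipliable fun i : ℕ => (1 - q ^ (i + 1) * c) := by
  simpa [sub_eq_add_neg] using multipliable_one_add_of_summable (aux_summable hq1 c)

lemma aux_tprod_ne {q c : ℂ} (hq1 : ‖q‖ < 1) (hc : ‖q * c‖ < 1) :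
    ∏' i : ℕ, (1 - q ^ (i + 1) * c) ≠ 0 := by
  have := tprod_one_add_ne_zero_of_summable (f := fun i : ℕ => -(q ^ (i + 1) * c))
    (fun i => by simpa [sub_eq_add_neg] using aux_fac_ne hq1 hc i) (aux_summable hq1 c)
  simpa [sub_eq_add_neg] using this

/-- finite q-Pochhammer -/
noncomputable def qP (q : ℂ) (n : ℕ) : ℂ := ∏ i ∈ range n, (1 - q ^ (i + 1))

lemma qP_succ (q : ℂ) (n : ℕ) : qP q (n + 1) = qP q n * (1 - q ^ (n + 1)) := by
  simp [qP, prod_range_succ]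

lemma aux_d_lt {q : ℂ} (hq : q ≠ 0) (m : ℕ) :
    (∏ i ∈ range m, (1 - q ^ i / q ^ m)) * q ^ (m * (m + 1) / 2) = (-1) ^ m * qP q m := by
  have h1 : ∏ i ∈ range m, (1 - q ^ i / q ^ m) = ∏ i ∈ range m, (1 - (q ^ (i + 1))⁻¹) := by
    rw [← prod_range_reflect (fun i => 1 - (q ^ (i + 1))⁻¹)]
    refine prod_congr rfl fun i hi => ?_
    have hi := mem_range.mp hi
    have : q ^ m = q ^ i * q ^ (m - 1 - i + 1) := by rw [← pow_add]; congr 1; omega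
    rw [this]
    field_simp
  rw [h1]
  clear h1
  induction m with
  | zero => simp [qP]
  | succ m ih =>
    rw [prod_range_succ, qP_succ]
    have h2 : (m + 1) * (m + 1 + 1) / 2 = m * (m + 1) / 2 + (m + 1) := by
      have : (m + 1) * (m + 1 + 1) = m * (m + 1) + (m + 1) * 2 := by ring
      rw [this, Nat.add_mul_div_right _ _ (by norm_num)]
    rw [h2, pow_add]
    have h3 : (1 - (q ^ (m + 1))⁻¹) * q ^ (m + 1) = - (1 - q ^ (m + 1)) := by
      field_simp
      ring
    calc _ = ((∏ i ∈ range m, (1 - (q ^ (i + 1))⁻¹)) * q ^ (m * (m + 1) / 2)) *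
          ((1 - (q ^ (m + 1))⁻¹) * q ^ (m + 1)) := by ring
      _ = _ := by rw [ih, h3]; ring

lemma aux_d_base {q : ℂ} (hq : q ≠ 0) (m : ℕ) :
    (∏ i ∈ range m, ((1 - q ^ i / q ^ m) * (1 - q ^ (i + m + 1)))) * q ^ (m * (m + 1) / 2)
      = (-1) ^ m * qP q (2 * m) := by
  have h : qP q (2 * m) = qP q m * ∏ i ∈ range m, (1 - q ^ (i + m + 1)) := by
    rw [two_mul, qP, prod_range_add, qP]
    congr 1
    refine prod_congr rfl fun i _ => ?_
    rw [add_comm m i]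
  rw [prod_mul_distrib, h, ← mul_assoc, ← aux_d_lt hq]
  ring

lemma aux_d {q : ℂ} (hq : q ≠ 0) (m k : ℕ) :
    (∏ i ∈ (range (m + k + 1)).erase m, ((1 - q ^ i / q ^ m) * (1 - q ^ (i + m + 1))))
      * (q ^ (m * (m + 1) / 2) * (1 - q ^ (2 * m + 1)))
      = (-1) ^ m * (qP q k * qP q (m + k + 1 + m)) := by
  induction k with
  | zero =>
    have : (range (m + 0 + 1)).erase m = range m := by
      ext i; simp; omega
    rw [this, ← mul_assoc, aux_d_base hq]
    have h2 : m + 0 + 1 + m = 2 * m + 1 := by ring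
    rw [h2, qP_succ]
    simp [qP]
    ring
  | succ k ih =>
    have : (range (m + (k + 1) + 1)).erase m
        = insert (m + k + 1) ((range (m + k + 1)).erase m) := by
      ext i; simp; omega
    rw [this, prod_insert (by simp)]
    have h1 : q ^ (m + k + 1) / q ^ m = q ^ (k + 1) := by
      rw [add_assoc, pow_add]; field_simp
    have h2 : m + (k + 1) + 1 + m = (m + k + 1 + m) + 1 := by ring
    rw [h1, h2, qP_succ, qP_succ, mul_assoc, ih]
    ring

lemma aux_lagrange {q s : ℂ} (hq : q ≠ 0) (hq' : ∀ n : ℕ, q ^ (n + 1) ≠ 1) (N : ℕ) :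
    ∑ m ∈ range (N + 1), ∏ i ∈ (range (N + 1)).erase m,
      ((1 + q ^ (2 * i + 1) - q ^ i * s) / ((1 - q ^ i / q ^ m) * (1 - q ^ (i + m + 1)))) = 1 := by
  set v : ℕ → ℂ := fun i => (q ^ i)⁻¹ + q ^ (i + 1) with hv
  have key : ∀ i m : ℕ, (1 - q ^ i / q ^ m) * (1 - q ^ (i + m + 1)) = q ^ i * (v i - v m) := by
    intro i m
    simp only [hv]
    have : q ^ i ≠ 0 := pow_ne_zero _ hq
    have : q ^ m ≠ 0 := pow_ne_zero _ hq
    field_simp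
    ring
  have hlt : ∀ i m : ℕ, m < i → v i - v m ≠ 0 := by
    intro i m him h0
    have h := key i m
    rw [h0, mul_zero] at h
    obtain ⟨k, rfl⟩ : ∃ k, i = m + (k + 1) := ⟨i - m - 1, by omega⟩
    have h1 : q ^ (m + (k + 1)) / q ^ m = q ^ (k + 1) := by
      rw [pow_add]; field_simp
    rw [h1] at h
    rcases mul_eq_zero.mp h with h | h
    · exact hq' _ (sub_eq_zero.mp h).symm
    · exact hq' _ (sub_eq_zero.mp h).symm
  have hne : ∀ i m : ℕ, i ≠ m → v i - v m ≠ 0 := by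
    intro i m him
    rcases lt_or_gt_of_ne him with h | h
    · intro h0
      exact hlt m i h (by rw [← neg_sub, h0, neg_zero])
    · exact hlt i m h
  have hinj : Set.InjOn v (range (N + 1) : Finset ℕ) := by
    intro i _ m _ him
    by_contra hc
    exact hne i m hc (sub_eq_zero.mpr him)
  have hL := congrArg (Polynomial.eval s) (Lagrange.sum_basis hinj ⟨0, by simp⟩)
  rw [Polynomial.eval_finsetSum, Polynomial.eval_one] at hL
  refine Eq.trans ?_ hL
  refine sum_congr rfl fun m _ => ?_
  rw [Lagrange.basis, Polynomial.eval_prod]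
  refine prod_congr rfl fun i hi => ?_
  have him := hne i m (mem_erase.mp hi).1
  have hmi := hne m i (mem_erase.mp hi).1.symm
  rw [key, Lagrange.basisDivisor]
  simp only [Polynomial.eval_mul, Polynomial.eval_C, Polynomial.eval_sub, Polynomial.eval_X]
  have e1 : 1 + q ^ (2 * i + 1) - q ^ i * s = q ^ i * (v i - s) := by
    simp only [hv]
    have : q ^ i ≠ 0 := pow_ne_zero _ hq
    field_simp
    ring
  have : q ^ i ≠ 0 := pow_ne_zero _ hq
  rw [e1, mul_div_mul_left _ _ this, ← neg_sub (v i) (v m), ← neg_sub (v i) s, inv_neg, neg_mul_neg,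
    div_eq_mul_inv, mul_comm]

lemma qP_ne {q : ℂ} (hq' : ∀ n : ℕ, q ^ (n + 1) ≠ 1) (n : ℕ) : qP q n ≠ 0 :=
  prod_ne_zero_iff.mpr fun i _ => sub_ne_zero.mpr (hq' i).symm

lemma aux_finite {q s : ℂ} (hq : q ≠ 0) (hq' : ∀ n : ℕ, q ^ (n + 1) ≠ 1) (a : ℕ → ℂ)
    (ha : ∀ i, a i = 1 + q ^ (2 * i + 1) - q ^ i * s) (ha0 : ∀ i, a i ≠ 0) (N : ℕ) :
    ∑ m ∈ range (N + 1), ((-1 : ℂ) ^ m * q ^ (m * (m + 1) / 2) * (1 - q ^ (2 * m + 1)) / a m) *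
      (qP q N * qP q (N + 1) * ((qP q (N - m))⁻¹ * (qP q (N + 1 + m))⁻¹))
    = qP q N * qP q (N + 1) * (∏ i ∈ range (N + 1), a i)⁻¹ := by
  have hL := aux_lagrange (s := s) hq hq' N
  have hL2 := congrArg (fun z => qP q N * qP q (N + 1) * (∏ i ∈ range (N + 1), a i)⁻¹ * z) hL
  simp only [mul_one, mul_sum] at hL2
  refine Eq.trans ?_ hL2
  refine sum_congr rfl fun m hm => ?_
  have hmN : m ≤ N := by have := mem_range.mp hm; omega
  rw [prod_div_distrib]
  simp only [← ha]
  obtain ⟨k, rfl⟩ := Nat.exists_eq_add_of_le hmN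
  have hd := aux_d hq m k
  rw [← mul_prod_erase _ _ hm]
  have hA : ∏ i ∈ (range (m + k + 1)).erase m, a i ≠ 0 := prod_ne_zero_iff.mpr fun i _ => ha0 i
  have hk : m + k - m = k := by omega
  rw [hk]
  have h1 := qP_ne hq' k
  have h2 := qP_ne hq' (m + k + 1 + m)
  have h3 : q ^ (m * (m + 1) / 2) ≠ 0 := pow_ne_zero _ hq
  have h4 : (1 - q ^ (2 * m + 1)) ≠ 0 := sub_ne_zero.mpr (hq' _).symm
  have h5 := ha0 m
  have hs : ((-1 : ℂ) ^ m) * (-1) ^ m = 1 := by rw [← mul_pow]; simp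
  set D := ∏ i ∈ (range (m + k + 1)).erase m, ((1 - q ^ i / q ^ m) * (1 - q ^ (i + m + 1)))
  have hD : D ≠ 0 := by
    intro h0
    rw [h0, zero_mul] at hd
    exact mul_ne_zero (pow_ne_zero _ (by norm_num)) (mul_ne_zero h1 h2) hd.symm
  set A := ∏ i ∈ (range (m + k + 1)).erase m, a i
  have hkey : (-1 : ℂ) ^ m * q ^ (m * (m + 1) / 2) * (1 - q ^ (2 * m + 1)) *
      ((qP q k)⁻¹ * (qP q (m + k + 1 + m))⁻¹) = D⁻¹ := by
    rw [← mul_inv, ← mul_eq_one_iff_eq_inv₀ hD]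
    calc _ = (-1 : ℂ) ^ m * (D * (q ^ (m * (m + 1) / 2) * (1 - q ^ (2 * m + 1)))) *
          (qP q k * qP q (m + k + 1 + m))⁻¹ := by ring
      _ = ((-1 : ℂ) ^ m * (-1) ^ m) * ((qP q k * qP q (m + k + 1 + m)) *
          (qP q k * qP q (m + k + 1 + m))⁻¹) := by rw [hd]; ring
      _ = 1 := by rw [hs, mul_inv_cancel₀ (mul_ne_zero h1 h2), one_mul]
  calc _ = ((-1 : ℂ) ^ m * q ^ (m * (m + 1) / 2) * (1 - q ^ (2 * m + 1)) *
      ((qP q k)⁻¹ * (qP q (m + k + 1 + m))⁻¹)) * (qP q (m + k) * qP q (m + k + 1)) * (a m)⁻¹ := by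
        ring
    _ = _ := by
      rw [hkey]
      field_simp

/-- **The Bloch–Okounkov one-point function as a reciprocal theta function.**
For `0 < |q| < 1` and `1 < |t| < 1/|q|`,
`∑_{m≥0} (-1)^m q^{m(m+1)/2} (1-q^{2m+1})/((1-t⁻¹q^m)(1-tq^{m+1}))
  = (q)_∞² / ((1-t⁻¹) ∏_{i≥1} (1-q^i t)(1-q^i t⁻¹)) = t/Θ(t)`,
all series and products converging absolutely. -/
theorem stmt7 (q t : ℂ) (hq0 : 0 < ‖q‖) (hq1 : ‖q‖ < 1)
    (ht1 : 1 < ‖t‖) (ht2 : ‖t‖ < 1 / ‖q‖) :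
    (Summable fun m : ℕ =>
      ‖(-1 : ℂ) ^ m * q ^ (m * (m + 1) / 2) * (1 - q ^ (2 * m + 1)) /
        ((1 - t⁻¹ * q ^ m) * (1 - t * q ^ (m + 1)))‖) ∧
    (Multipliable fun i : ℕ => (1 - q ^ (i + 1))) ∧
    (Multipliable fun i : ℕ => (1 - q ^ (i + 1) * t) * (1 - q ^ (i + 1) * t⁻¹)) ∧
    (∑' m : ℕ, (-1 : ℂ) ^ m * q ^ (m * (m + 1) / 2) * (1 - q ^ (2 * m + 1)) /
        ((1 - t⁻¹ * q ^ m) * (1 - t * q ^ (m + 1))))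
      = (Qinf q) ^ 2 /
          ((1 - t⁻¹) * ∏' i : ℕ, (1 - q ^ (i + 1) * t) * (1 - q ^ (i + 1) * t⁻¹)) ∧
    (∑' m : ℕ, (-1 : ℂ) ^ m * q ^ (m * (m + 1) / 2) * (1 - q ^ (2 * m + 1)) /
        ((1 - t⁻¹ * q ^ m) * (1 - t * q ^ (m + 1))))
      = t / Theta q t := by
  have hq : q ≠ 0 := norm_pos_iff.mp hq0
  have ht : t ≠ 0 := norm_pos_iff.mp (by linarith)
  have hqt : ‖q * t‖ < 1 := by
    rw [lt_div_iff₀ hq0] at ht2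
    rw [norm_mul]; linarith
  have hx1 : ‖t⁻¹‖ < 1 := by
    rw [norm_inv]; exact inv_lt_one_of_one_lt₀ ht1
  have hqx : ‖q * t⁻¹‖ < 1 := by
    rw [norm_mul]
    exact mul_lt_one_of_nonneg_of_lt_one_left (norm_nonneg _) hq1 hx1.le
  have hq' : ∀ n : ℕ, q ^ (n + 1) ≠ 1 := by
    intro n h
    have := aux_fac_ne (c := 1) hq1 (by simpa using hq1) n
    simp [h] at this
  have hfx : ∀ m : ℕ, 1 - t⁻¹ * q ^ m ≠ 0 := by
    intro m
    cases m with
    | zero =>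
      intro h
      have : t⁻¹ = 1 := by simpa using (sub_eq_zero.mp h).symm
      rw [this] at hx1
      simp at hx1
    | succ m => rw [mul_comm]; exact aux_fac_ne hq1 hqx m
  have hft : ∀ m : ℕ, 1 - t * q ^ (m + 1) ≠ 0 := by
    intro m; rw [mul_comm]; exact aux_fac_ne hq1 hqt m
  set a : ℕ → ℂ := fun m => (1 - t⁻¹ * q ^ m) * (1 - t * q ^ (m + 1)) with ha
  have ha0 : ∀ i, a i ≠ 0 := fun i => mul_ne_zero (hfx i) (hft i)
  have hpow : Tendsto (fun m : ℕ => q ^ m) atTop (𝓝 0) :=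
    tendsto_pow_atTop_nhds_zero_of_norm_lt_one hq1
  have hpow1 : Tendsto (fun m : ℕ => q ^ (m + 1)) atTop (𝓝 0) :=
    hpow.comp (tendsto_add_atTop_nat 1)
  have hxlim : Tendsto (fun m : ℕ => 1 - t⁻¹ * q ^ m) atTop (𝓝 1) := by
    simpa using (hpow.const_mul t⁻¹).const_sub 1
  have halim : Tendsto a atTop (𝓝 1) := by
    have h2 : Tendsto (fun m : ℕ => 1 - t * q ^ (m + 1)) atTop (𝓝 1) := by
      simpa using (hpow1.const_mul t).const_sub 1
    simpa using hxlim.mul h2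
  set f : ℕ → ℂ := fun m => (-1 : ℂ) ^ m * q ^ (m * (m + 1) / 2) * (1 - q ^ (2 * m + 1)) / a m
    with hf
  have hsum : Summable fun m => ‖f m‖ := by
    have hg : Tendsto (fun m : ℕ => (1 - q ^ (2 * m + 1)) / a m) atTop (𝓝 1) := by
      have h1 : Tendsto (fun m : ℕ => q ^ (2 * m + 1)) atTop (𝓝 0) :=
        hpow.comp (tendsto_atTop_mono (fun m => by simp only [id]; omega) tendsto_id)
      have h2 := (h1.const_sub 1).div halim one_ne_zero
      rw [sub_zero, div_one] at h2
      exact h2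
    obtain ⟨C, hC⟩ := (Metric.isBounded_range_of_tendsto _ hg).exists_norm_le
    refine Summable.of_nonneg_of_le (fun _ => norm_nonneg _) (fun m => ?_)
      ((summable_geometric_of_lt_one (norm_nonneg q) hq1).mul_right C)
    have h1 := hC _ ⟨m, rfl⟩
    have h2 : f m = (-1) ^ m * q ^ (m * (m + 1) / 2) * ((1 - q ^ (2 * m + 1)) / a m) := by
      simp only [hf]; ring
    rw [h2, norm_mul, norm_mul, norm_pow, norm_pow, norm_neg, norm_one, one_pow, one_mul]
    have h3 : m ≤ m * (m + 1) / 2 := by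
      rw [Nat.le_div_iff_mul_le (by norm_num)]
      cases m with
      | zero => simp
      | succ m => exact Nat.mul_le_mul_left _ (by omega)
    exact mul_le_mul (pow_le_pow_of_le_one (norm_nonneg _) hq1.le h3) h1 (norm_nonneg _)
      (by positivity)
  have hM1 : Multipliable fun i : ℕ => (1 - q ^ (i + 1)) := by
    simpa using aux_mult hq1 1
  have hMt := aux_mult hq1 t
  have hMx := aux_mult hq1 t⁻¹
  have hM2 : Multipliable fun i : ℕ => (1 - q ^ (i + 1) * t) * (1 - q ^ (i + 1) * t⁻¹) :=
    hMt.mul hMx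
  have hQ : Qinf q ≠ 0 := by
    simpa [Qinf] using aux_tprod_ne (c := 1) hq1 (by simpa using hq1)
  set B : ℂ := ∏' i : ℕ, (1 - q ^ (i + 1) * t) * (1 - q ^ (i + 1) * t⁻¹) with hB
  have hB0 : B ≠ 0 := by
    rw [hB, hMt.tprod_mul hMx]
    exact mul_ne_zero (aux_tprod_ne hq1 hqt) (aux_tprod_ne hq1 hqx)
  have hx0 : 1 - t⁻¹ ≠ 0 := by simpa using hfx 0
  have hP : Tendsto (qP q) atTop (𝓝 (Qinf q)) := hM1.hasProd.tendsto_prod_nat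
  have hP1 : Tendsto (fun n => qP q (n + 1)) atTop (𝓝 (Qinf q)) :=
    hP.comp (tendsto_add_atTop_nat 1)
  have hPi : Tendsto (fun n => (qP q n)⁻¹) atTop (𝓝 (Qinf q)⁻¹) := hP.inv₀ hQ
  obtain ⟨C1, hC1⟩ := (Metric.isBounded_range_of_tendsto _ hP).exists_norm_le
  obtain ⟨C2, hC2⟩ := (Metric.isBounded_range_of_tendsto _ hPi).exists_norm_le
  have hC1' : ∀ n, ‖qP q n‖ ≤ C1 := fun n => hC1 _ ⟨n, rfl⟩
  have hC2' : ∀ n, ‖(qP q n)⁻¹‖ ≤ C2 := fun n => hC2 _ ⟨n, rfl⟩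
  have hC1p : 0 ≤ C1 := (norm_nonneg _).trans (hC1' 0)
  have hC2p : 0 ≤ C2 := (norm_nonneg _).trans (hC2' 0)
  set r : ℕ → ℕ → ℂ := fun N m =>
    qP q N * qP q (N + 1) * ((qP q (N - m))⁻¹ * (qP q (N + 1 + m))⁻¹) with hr
  have hrb : ∀ N m, ‖r N m‖ ≤ C1 * C1 * (C2 * C2) := by
    intro N m
    simp only [hr]
    rw [norm_mul, norm_mul, norm_mul]
    exact mul_le_mul (mul_le_mul (hC1' _) (hC1' _) (norm_nonneg _) hC1p)
      (mul_le_mul (hC2' _) (hC2' _) (norm_nonneg _) hC2p) (by positivity) (by positivity)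
  have hrlim : ∀ m, Tendsto (fun N => r N m) atTop (𝓝 1) := by
    intro m
    have h1 : Tendsto (fun N => (qP q (N - m))⁻¹) atTop (𝓝 (Qinf q)⁻¹) :=
      hPi.comp (tendsto_sub_atTop_nat m)
    have h2 : Tendsto (fun N => (qP q (N + 1 + m))⁻¹) atTop (𝓝 (Qinf q)⁻¹) :=
      hPi.comp (tendsto_atTop_mono (fun N => by simp only [id]; omega) tendsto_id)
    have h3 := (hP.mul hP1).mul (h1.mul h2)
    have h4 : Qinf q * Qinf q * ((Qinf q)⁻¹ * (Qinf q)⁻¹) = 1 := by field_simp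
    rw [h4] at h3
    exact h3
  set F : ℕ → ℕ → ℂ := fun N m => if m ≤ N then f m * r N m else 0 with hF
  have hlim1 : Tendsto (fun N => ∑' m, F N m) atTop (𝓝 (∑' m, f m)) := by
    refine tendsto_tsum_of_dominated_convergence
      (bound := fun m => ‖f m‖ * (C1 * C1 * (C2 * C2))) (hsum.mul_right _) ?_ ?_
    · intro m
      have h1 : Tendsto (fun N => f m * r N m) atTop (𝓝 (f m)) := by
        simpa using (hrlim m).const_mul (f m)
      refine h1.congr' ?_
      filter_upwards [eventually_ge_atTop m] with N hN
      simp [hF, hN]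
    · refine Eventually.of_forall fun N m => ?_
      simp only [hF]
      split_ifs
      · rw [norm_mul]
        exact mul_le_mul_of_nonneg_left (hrb N m) (norm_nonneg _)
      · rw [norm_zero]; positivity
  have hFsum : ∀ N, ∑' m, F N m = qP q N * qP q (N + 1) * (∏ i ∈ range (N + 1), a i)⁻¹ := by
    intro N
    rw [tsum_eq_sum (s := range (N + 1))]
    · rw [← aux_finite (s := t⁻¹ + t * q) hq hq' a _ ha0 N]
      · refine sum_congr rfl fun m hm => ?_
        have hmN : m ≤ N := by have := mem_range.mp hm; omega
        simp [hF, hmN, hf, hr]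
      · intro i
        simp only [ha]
        have hti : t * t⁻¹ = 1 := mul_inv_cancel₀ ht
        linear_combination (q ^ (2 * i + 1)) * hti
    · intro m hm
      have hmN : ¬ m ≤ N := by
        intro h; exact hm (mem_range.mpr (by omega))
      simp [hF, hmN]
  have haprod : ∀ N, (∏ i ∈ range N, a i) * (1 - t⁻¹ * q ^ N) = (1 - t⁻¹) *
      ∏ i ∈ range N, ((1 - q ^ (i + 1) * t) * (1 - q ^ (i + 1) * t⁻¹)) := by
    intro N
    induction N with
    | zero => simp
    | succ N ih =>
      rw [prod_range_succ, prod_range_succ, ← mul_assoc (1 - t⁻¹), ← ih]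
      simp only [ha]
      ring
  have hApr : Tendsto (fun N => ∏ i ∈ range N, a i) atTop (𝓝 ((1 - t⁻¹) * B)) := by
    have h1 := (hM2.hasProd.tendsto_prod_nat.const_mul (1 - t⁻¹)).div hxlim one_ne_zero
    rw [div_one] at h1
    refine h1.congr fun N => ?_
    rw [Pi.div_apply]
    rw [← haprod, mul_div_assoc, div_self (hfx N), mul_one]
  have hlim2 : Tendsto (fun N => ∑' m, F N m) atTop
      (𝓝 (Qinf q * Qinf q * ((1 - t⁻¹) * B)⁻¹)) := by
    simp only [hFsum]
    exact (hP.mul hP1).mul ((hApr.comp (tendsto_add_atTop_nat 1)).inv₀ (mul_ne_zero hx0 hB0))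
  have hmain : ∑' m, f m = Qinf q ^ 2 / ((1 - t⁻¹) * B) := by
    rw [tendsto_nhds_unique hlim1 hlim2, sq, div_eq_mul_inv]
  refine ⟨hsum, hM1, hM2, hmain, hmain.trans ?_⟩
  have ht1' : t - 1 ≠ 0 := by
    intro h
    rw [sub_eq_zero.mp h] at ht1
    simp at ht1
  have e : 1 - t⁻¹ = (t - 1) / t := by field_simp
  rw [Theta, ← hB, e]
  field_simp
end

section
/- For k ∈ ℤ let c_k(q) denote the formal sum ∑_{m=0}^∞ (−1)^m q^{(m+1)(m−2k)/2} (well defined as a formal Laurent series in q: for each integer exponent only finitely many m contribute, and the exponents are bounded below). Then: (i) each c_k(q) lies in ℤ[[q]], i.e. all terms with negative exponent cancel in pairs; and (ii) the series G(t) = ∑_{k∈ℤ} c_k(q) t^{−k−1/2} is the unique formal series ∑_{n∈ℤ} g_{n+1/2}(q) t^{n+1/2} with all coefficients g_{n+1/2} ∈ ℂ[[q]] satisfying the formal q-difference equation G(qt) + q^{1/2} t G(t) = δ_{1/2}(qt), i.e. q^n g_{n+1/2}(q) + g_{n−1/2}(q) = q^n in ℂ[[q]] for every n ∈ ℤ.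 -/
/-- The coefficient of `q^j` in the formal sum `c_k(q) = ∑_{m≥0} (-1)^m q^{(m+1)(m-2k)/2}`:
the (finite) signed count of indices `m` with `(m+1)(m-2k)/2 = j`. -/
noncomputable def cCoeff (k j : ℤ) : ℂ :=
  ∑ᶠ m : ℕ, if ((m : ℤ) + 1) * ((m : ℤ) - 2 * k) = 2 * j then (-1 : ℂ) ^ m else 0

/-- `c_k(q)` viewed as a formal power series in `q` (part (i) of the statement asserts
that its negative-exponent coefficients vanish, so this captures the whole series). -/
noncomputable def ck (k : ℤ) : PowerSeries ℂ := PowerSeries.mk fun j : ℕ => cCoeff k j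

theorem cCoeff_eq_sum (k j : ℤ) (N : ℕ) (hN : 2 * |k| + 2 * |j| + 1 ≤ N) :
    cCoeff k j = ∑ m ∈ Finset.range N,
      if ((m : ℤ) + 1) * ((m : ℤ) - 2 * k) = 2 * j then (-1 : ℂ) ^ m else 0 := by
  unfold cCoeff
  apply finsum_eq_sum_of_support_subset
  intro m hm
  simp only [Function.mem_support, ne_eq, ite_eq_right_iff, Classical.not_imp] at hm
  simp only [Finset.coe_range, Set.mem_Iio]
  by_contra hc
  have h1 : (N : ℤ) ≤ m := by exact_mod_cast not_lt.mp hc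
  have hk := le_abs_self k
  have hj := le_abs_self j
  have := abs_nonneg k
  have := abs_nonneg j
  nlinarith [hm.1]

theorem cCoeff_neg (k j : ℤ) (hj : j < 0) : cCoeff k j = 0 := by
  rcases le_or_gt k 0 with hk | hk
  · unfold cCoeff
    apply finsum_eq_zero_of_forall_eq_zero
    intro m
    rw [if_neg]
    intro h
    have : (0 : ℤ) ≤ m := by positivity
    nlinarith
  · obtain ⟨K, rfl⟩ := Int.eq_ofNat_of_zero_le hk.le
    have hs : cCoeff K j = ∑ m ∈ Finset.range (2 * K),
      if ((m : ℤ) + 1) * ((m : ℤ) - 2 * (K : ℤ)) = 2 * j then (-1 : ℂ) ^ m else 0 := by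
      unfold cCoeff
      apply finsum_eq_sum_of_support_subset
      intro m hm
      simp only [Function.mem_support, ne_eq, ite_eq_right_iff, Classical.not_imp] at hm
      simp only [Finset.coe_range, Set.mem_Iio]
      by_contra hc
      have h1 : (2 * K : ℤ) ≤ m := by exact_mod_cast not_lt.mp hc
      nlinarith [hm.1]
    have h2 := Finset.sum_range_reflect (fun m : ℕ =>
      if ((m : ℤ) + 1) * ((m : ℤ) - 2 * (K : ℤ)) = 2 * j then (-1 : ℂ) ^ m else 0) (2 * K)
    rw [← hs] at h2
    have h3 : cCoeff K j = - cCoeff K j := by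
      conv_lhs => rw [← h2]
      rw [hs, ← Finset.sum_neg_distrib]
      apply Finset.sum_congr rfl
      intro m hm
      have hm' := Finset.mem_range.mp hm
      have hc : ((2 * K - 1 - m : ℕ) : ℤ) = 2 * K - 1 - m := by omega
      have e : (((2 * K - 1 - m : ℕ) : ℤ) + 1) * (((2 * K - 1 - m : ℕ) : ℤ) - 2 * (K : ℤ))
          = ((m : ℤ) + 1) * ((m : ℤ) - 2 * (K : ℤ)) := by rw [hc]; ring
      have s : (-1 : ℂ) ^ (2 * K - 1 - m) = - (-1) ^ m := by
        rcases Nat.even_or_odd m with h | h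
        · have : Odd (2 * K - 1 - m) := by
            obtain ⟨a, rfl⟩ := h
            exact ⟨K - 1 - a, by omega⟩
          rw [this.neg_one_pow, h.neg_one_pow]
        · have : Even (2 * K - 1 - m) := by
            obtain ⟨a, rfl⟩ := h
            exact ⟨K - 1 - a, by omega⟩
          rw [this.neg_one_pow, h.neg_one_pow, neg_neg]
      simp only [e, s]
      split_ifs <;> simp
    exact self_eq_neg.mp h3

theorem cCoeff_int (k j : ℤ) : ∃ z : ℤ, cCoeff k j = (z : ℂ) := by
  rw [cCoeff_eq_sum k j (2 * |k| + 2 * |j| + 1).toNat (Int.self_le_toNat _)]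
  refine ⟨∑ m ∈ Finset.range (2 * |k| + 2 * |j| + 1).toNat,
      if ((m : ℤ) + 1) * ((m : ℤ) - 2 * k) = 2 * j then (-1 : ℤ) ^ m else 0, ?_⟩
  push_cast
  rfl

theorem cCoeff_rec (n j : ℤ) :
    cCoeff (-n - 1) (j - n) + cCoeff (-n) j = if j = n then 1 else 0 := by
  obtain ⟨N, hN⟩ : ∃ N : ℕ, 2 * |-n-1| + 2 * |j-n| + 1 + (2 * |-n| + 2 * |j| + 1) ≤ (N : ℤ) :=
    ⟨_, Int.self_le_toNat _⟩
  have := abs_nonneg (-n-1)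
  have := abs_nonneg (j-n)
  have := abs_nonneg (-n)
  have := abs_nonneg j
  rw [cCoeff_eq_sum (-n-1) (j-n) N (by linarith), cCoeff_eq_sum (-n) j (N+1) (by push_cast; linarith),
    Finset.sum_range_succ', ← add_assoc, ← Finset.sum_add_distrib, Finset.sum_eq_zero, zero_add]
  · have : (((0 : ℕ) : ℤ) + 1) * (((0 : ℕ) : ℤ) - 2 * -n) = 2 * j ↔ j = n := by
      push_cast
      constructor <;> intro h <;> linarith
    simp only [this, pow_zero]
  · intro m _
    have : (((m + 1 : ℕ) : ℤ) + 1) * (((m + 1 : ℕ) : ℤ) - 2 * -n) = 2 * j ↔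
        ((m : ℤ) + 1) * ((m : ℤ) - 2 * (-n - 1)) = 2 * (j - n) := by
      push_cast
      constructor <;> intro h <;> linarith
    simp only [this, pow_succ]
    split_ifs <;> simp

theorem coeff_ck (k j : ℤ) : ((ck k : LaurentSeries ℂ)).coeff j = cCoeff k j := by
  rw [PowerSeries.coeff_coe]
  split_ifs with h
  · exact (cCoeff_neg k j h).symm
  · rw [ck, PowerSeries.coeff_mk, Int.natAbs_of_nonneg (not_lt.mp h)]

theorem single_mul_coeff (n j : ℤ) (x : LaurentSeries ℂ) :
    ((HahnSeries.single n (1 : ℂ) : LaurentSeries ℂ) * x).coeff j = x.coeff (j - n) := by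
  have := HahnSeries.coeff_single_mul_add (r := (1 : ℂ)) (x := x) (a := j - n) (b := n)
  simpa using this

theorem ck_rec (n : ℤ) :
      (HahnSeries.single n (1 : ℂ) : LaurentSeries ℂ) * ((ck (-n - 1) : LaurentSeries ℂ))
          + ((ck (-n) : LaurentSeries ℂ))
        = (HahnSeries.single n (1 : ℂ) : LaurentSeries ℂ) := by
  ext j
  rw [HahnSeries.coeff_add, single_mul_coeff, coeff_ck, coeff_ck, cCoeff_rec,
    HahnSeries.coeff_single]
  split_ifs <;> rfl

theorem h_zero (h : ℤ → ℤ → ℂ) (hneg : ∀ n j, j < 0 → h n j = 0)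
    (hrec : ∀ n j, h n (j - n) + h (n - 1) j = 0) (n j : ℤ) : h n j = 0 := by
  have key : ∀ (J : ℕ) (n j : ℤ), 0 ≤ n → j < J → h n j = 0 := by
    intro J
    induction J with
    | zero => intro n j _ hj; exact hneg n j (by simpa using hj)
    | succ J ih =>
      intro n j hn hj
      have h1 := hrec (n + 1) j
      rw [ih (n + 1) (j - (n + 1)) (by omega) (by push_cast at hj; omega), zero_add,
        add_sub_cancel_right] at h1
      exact h1
  have key0 : ∀ (n j : ℤ), 0 ≤ n → h n j = 0 := fun n j hn =>
    key (j + 1).toNat n j hn (by have := Int.self_le_toNat (j + 1); omega)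
  have key1 : ∀ (M : ℕ) (j : ℤ), h (-M) j = 0 := by
    intro M
    induction M with
    | zero => intro j; exact key0 _ j (by simp)
    | succ M ih =>
      intro j
      have h1 := hrec (-M) j
      rw [ih, zero_add] at h1
      rw [← h1]; congr 1; push_cast; ring
  rcases le_or_gt 0 n with hn | hn
  · exact key0 n j hn
  · have := key1 n.natAbs j
    rwa [show -(n.natAbs : ℤ) = n by omega] at this

/-- **The explicit solution of the 1-point `q`-difference equation.**
(i) Each `c_k(q) = ∑_{m≥0} (-1)^m q^{(m+1)(m-2k)/2}` lies in `ℤ[[q]]`: its coefficients at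
negative exponents vanish (cancel in pairs) and all its coefficients are integers.
(ii) `G(t) = ∑_{k∈ℤ} c_k(q) t^{-k-1/2}`, i.e. the series with `t^{n+1/2}`-coefficient
`g_{n+1/2} = c_{-n-1}`, is the unique formal series with coefficients in `ℂ[[q]]`
satisfying `G(qt) + q^{1/2} t G(t) = δ_{1/2}(qt)`, i.e.
`q^n g_{n+1/2} + g_{n-1/2} = q^n` for every `n ∈ ℤ`. -/
theorem stmt8 :
    (∀ k : ℤ, (∀ j : ℤ, j < 0 → cCoeff k j = 0) ∧ (∀ j : ℤ, ∃ z : ℤ, cCoeff k j = (z : ℂ))) ∧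
    (∀ n : ℤ,
      (HahnSeries.single n (1 : ℂ) : LaurentSeries ℂ) * ((ck (-n - 1) : LaurentSeries ℂ))
          + ((ck (-n) : LaurentSeries ℂ))
        = (HahnSeries.single n (1 : ℂ) : LaurentSeries ℂ)) ∧
    (∀ g : ℤ → PowerSeries ℂ,
      (∀ n : ℤ,
        (HahnSeries.single n (1 : ℂ) : LaurentSeries ℂ) * ((g n : LaurentSeries ℂ))
            + ((g (n - 1) : LaurentSeries ℂ))
          = (HahnSeries.single n (1 : ℂ) : LaurentSeries ℂ)) →
      ∀ n : ℤ, g n = ck (-n - 1)) := by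
  refine ⟨fun k => ⟨cCoeff_neg k, cCoeff_int k⟩, ck_rec, ?_⟩
  intro g hg n
  have hz := h_zero (fun n j => ((g n : LaurentSeries ℂ)).coeff j - cCoeff (-n - 1) j)
    (by
      intro n j hj
      simp only [PowerSeries.coeff_coe, if_pos hj, cCoeff_neg _ j hj, sub_zero])
    (by
      intro n j
      have h1 := congrArg (fun x : LaurentSeries ℂ => x.coeff j) (hg n)
      simp only [HahnSeries.coeff_add, single_mul_coeff, HahnSeries.coeff_single] at h1
      have h2 := cCoeff_rec n j
      have e : -(n - 1) - 1 = -n := by ring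
      simp only [e]
      by_cases hjn : j = n
      · rw [if_pos hjn] at h1 h2
        linear_combination h1 - h2
      · rw [if_neg hjn] at h1 h2
        linear_combination h1 - h2) n
  ext j
  have := hz j
  simp only [PowerSeries.coeff_coe] at this
  rw [if_neg (by omega), Int.natAbs_natCast, sub_eq_zero] at this
  rw [this, ck, PowerSeries.coeff_mk]
end

section
/- Fix an integer k ≥ 1 and q ∈ ℂ with 0 < |q| < 1. The series H_k(t₁,t₂) = P_{k+1}(t₁^{−1},q) · P_{k+1}(t₂^{−1},q) − ∑_{n=1}^∞ n^{2k} q^n [ (t₁/t₂)^n + (t₂/t₁)^n + (t₁t₂)^n + (t₁t₂)^{−n} ] / (1−q^n)² converges absolutely, and uniformly on compact subsets, on the domain Ω = { (t₁,t₂) ∈ ℂ× × ℂ× : |t₁| > 1, |t₂| > 1, |q t₁ t₂| < 1, |q/(t₁t₂)| < 1, |q t₁/t₂| < 1, |q t₂/t₁| < 1 }, defining a holomorphic function there; moreover this function extends to a holomorphic function on the open set U = { (t₁,t₂) ∈ ℂ× × ℂ× : t₁ ∉ q^ℤ, t₂ ∉ q^ℤ, t₁t₂ ∉ q^ℤ,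 and t₁/t₂ ∉ q^ℤ∖{1} } (in particular H_k has a meromorphic extension to ℂ× × ℂ×). -/
/-- `P_{k+1}(t,q) = (1/k!) ∑_{n≥1} ( n^k t^n/(1-q^n) + (-1)^{k+1} n^k q^n t^{-n}/(1-q^n) )`
(defined by this absolutely convergent series for `0 < |q| < 1`, `|q| < |t| < 1`). -/
noncomputable def Pfun (k : ℕ) (q t : ℂ) : ℂ :=
  (1 / (k.factorial : ℂ)) * ∑' n : ℕ,
    (((n : ℂ) + 1) ^ k * t ^ (n + 1) / (1 - q ^ (n + 1)) +
      (-1 : ℂ) ^ (k + 1) * ((n : ℂ) + 1) ^ k * q ^ (n + 1) * (t⁻¹) ^ (n + 1) /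
        (1 - q ^ (n + 1)))

/-- The `n`-th term (`n ≥ 1`, indexed by `n - 1 : ℕ`) of the correction series in `H_k`:
`n^{2k} q^n [ (t₁/t₂)^n + (t₂/t₁)^n + (t₁t₂)^n + (t₁t₂)^{-n} ] / (1-q^n)²`. -/
noncomputable def Hterm (k : ℕ) (q : ℂ) (n : ℕ) (p : ℂ × ℂ) : ℂ :=
  ((n : ℂ) + 1) ^ (2 * k) * q ^ (n + 1) *
    ((p.1 / p.2) ^ (n + 1) + (p.2 / p.1) ^ (n + 1) + (p.1 * p.2) ^ (n + 1) +
      ((p.1 * p.2)⁻¹) ^ (n + 1)) / (1 - q ^ (n + 1)) ^ 2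

/-- `H_k(t₁,t₂) = P_{k+1}(t₁⁻¹,q) P_{k+1}(t₂⁻¹,q)
  - ∑_{n≥1} n^{2k} q^n [ (t₁/t₂)^n + (t₂/t₁)^n + (t₁t₂)^n + (t₁t₂)^{-n} ]/(1-q^n)²`. -/
noncomputable def Hfun (k : ℕ) (q : ℂ) (p : ℂ × ℂ) : ℂ :=
  Pfun k q p.1⁻¹ * Pfun k q p.2⁻¹ - ∑' n : ℕ, Hterm k q n p

/-- The domain `Ω`. -/
def Omega (q : ℂ) : Set (ℂ × ℂ) :=
  {p | 1 < ‖p.1‖ ∧ 1 < ‖p.2‖ ∧ ‖q * p.1 * p.2‖ < 1 ∧ ‖q / (p.1 * p.2)‖ < 1 ∧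
    ‖q * p.1 / p.2‖ < 1 ∧ ‖q * p.2 / p.1‖ < 1}

/-- The open set `U`: `t₁, t₂, t₁t₂ ∉ q^ℤ` and `t₁/t₂ ∉ q^ℤ ∖ {1}`. -/
def Udom (q : ℂ) : Set (ℂ × ℂ) :=
  {p | p.1 ≠ 0 ∧ p.2 ≠ 0 ∧ (∀ m : ℤ, p.1 ≠ q ^ m) ∧ (∀ m : ℤ, p.2 ≠ q ^ m) ∧
    (∀ m : ℤ, p.1 * p.2 ≠ q ^ m) ∧ (∀ m : ℤ, m ≠ 0 → p.1 / p.2 ≠ q ^ m)}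


lemma hs_congr {f g : ℕ → ℂ} {a b : ℂ} (h : HasSum f a) (hf : ∀ n, g n = f n) (hab : b = a) :
    HasSum g b := by
  rw [hab, funext hf]
  exact h

/-- the rational functions `∑ (n+1)^j C(n+i,i) z^(n+1)` -/
noncomputable def LL : ℕ → ℕ → ℂ → ℂ
  | 0, i => fun z => z / (1 - z) ^ (i + 1)
  | j + 1, i => fun z => ((i : ℂ) + 1) * LL j (i + 1) z - (i : ℂ) * LL j i z

lemma LL_diff (j : ℕ) : ∀ (i : ℕ) (z : ℂ), z ≠ 1 → DifferentiableAt ℂ (LL j i) z := by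
  induction j with
  | zero =>
    intro i z hz
    have : (1 - z) ^ (i + 1) ≠ 0 := pow_ne_zero _ (sub_ne_zero.2 hz.symm)
    unfold LL
    fun_prop (disch := assumption)
  | succ j ih =>
    intro i z hz
    have h1 := ih (i + 1) z hz
    have h2 := ih i z hz
    unfold LL
    fun_prop

lemma LL_hasSum (j : ℕ) : ∀ (i : ℕ) (z : ℂ), ‖z‖ < 1 →
    HasSum (fun n : ℕ => ((n : ℂ) + 1) ^ j * ((n + i).choose i : ℂ) * z ^ (n + 1)) (LL j i z) := by
  induction j with
  | zero =>
    intro i z hz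
    have h := (hasSum_choose_mul_geometric_of_norm_lt_one i hz).mul_left z
    unfold LL
    refine hs_congr h (fun n => ?_) ?_
    · rw [pow_zero, pow_succ]
      generalize ((n + i).choose i : ℂ) = c
      ring
    · show z / (1 - z) ^ (i + 1) = _
      rw [mul_one_div]
  | succ j ih =>
    intro i z hz
    have h := ((ih (i + 1) z hz).mul_left ((i : ℂ) + 1)).sub ((ih i z hz).mul_left (i : ℂ))
    unfold LL
    refine hs_congr h (fun n => ?_) rfl
    have e : ((n : ℂ) + i + 1) * ((n + i).choose i : ℂ)
        = ((n + (i + 1)).choose (i + 1) : ℂ) * ((i : ℂ) + 1) := by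
      have := Nat.add_one_mul_choose_eq (n + i) i
      exact_mod_cast this
    rw [pow_succ]
    linear_combination ((n : ℂ) + 1) ^ j * z ^ (n + 1) * e

lemma LL_bound (j : ℕ) : ∀ (i : ℕ), ∃ C : ℝ, 0 ≤ C ∧ ∀ z : ℂ, ‖z‖ ≤ 1 / 2 → ‖LL j i z‖ ≤ C * ‖z‖ := by
  induction j with
  | zero =>
    intro i
    refine ⟨2 ^ (i + 1), by positivity, fun z hz => ?_⟩
    unfold LL
    have h1 : (1 / 2 : ℝ) ≤ ‖1 - z‖ := by
      have := norm_sub_norm_le (1 : ℂ) z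
      rw [norm_one] at this
      linarith
    rw [norm_div, norm_pow, div_le_iff₀ (by positivity)]
    have h2 : (1 : ℝ) ≤ (2 * ‖1 - z‖) ^ (i + 1) := one_le_pow₀ (by linarith)
    rw [mul_pow] at h2
    nlinarith [norm_nonneg z]
  | succ j ih =>
    intro i
    obtain ⟨C1, h10, h1⟩ := ih (i + 1)
    obtain ⟨C2, h20, h2⟩ := ih i
    refine ⟨((i : ℝ) + 1) * C1 + i * C2, by positivity, fun z hz => ?_⟩
    unfold LL
    have e1 : ‖((i : ℂ) + 1)‖ = (i : ℝ) + 1 := by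
      have := Complex.norm_natCast (i + 1)
      push_cast at this
      exact this
    calc _ ≤ ‖((i : ℂ) + 1) * LL j (i + 1) z‖ + ‖(i : ℂ) * LL j i z‖ := norm_sub_le _ _
      _ = ((i : ℝ) + 1) * ‖LL j (i + 1) z‖ + i * ‖LL j i z‖ := by
        rw [norm_mul, norm_mul, e1, Complex.norm_natCast]
      _ ≤ ((i : ℝ) + 1) * (C1 * ‖z‖) + i * (C2 * ‖z‖) := by
        gcongr
        · exact h1 z hz
        · exact h2 z hz
      _ = _ := by ring

noncomputable def SS (j : ℕ) (w : ℕ → ℂ) (q x : ℂ) : ℂ := ∑' m : ℕ, w m * LL j 0 (q ^ m * x)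

lemma summable_lin (r : ℝ) (h0 : 0 ≤ r) (hr : r < 1) (j : ℕ) :
    Summable (fun m : ℕ => ((m : ℝ) + 1) ^ j * r ^ m) := by
  rcases h0.eq_or_lt with rfl | h0
  · apply summable_of_ne_finset_zero (s := {0})
    intro b hb
    simp at hb
    simp [hb]
  have h := (summable_nat_add_iff 1).2
    (summable_pow_mul_geometric_of_norm_lt_one (R := ℝ) j (r := r) (by rwa [Real.norm_of_nonneg h0.le]))
  refine (h.mul_left (r⁻¹)).congr (fun m => ?_)
  push_cast
  rw [pow_succ]
  field_simp

lemma SS_diff (j : ℕ) (w : ℕ → ℂ) (hw : ∀ m, ‖w m‖ ≤ (m : ℝ) + 1) (q x : ℂ) (hq1 : ‖q‖ < 1)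
    (hx : ∀ m : ℕ, q ^ m * x ≠ 1) : DifferentiableAt ℂ (SS j w q) x := by
  obtain ⟨C, hC0, hC⟩ := LL_bound j 0
  set R := ‖x‖ + 1 with hR
  have hRpos : 0 < R := by positivity
  have ht : Filter.Tendsto (fun m : ℕ => ‖q‖ ^ m * R) Filter.atTop (nhds (0 * R)) :=
    (tendsto_pow_atTop_nhds_zero_of_lt_one (norm_nonneg q) hq1).mul_const R
  rw [zero_mul] at ht
  obtain ⟨M, hM⟩ := Filter.eventually_atTop.1 (ht.eventually (ge_mem_nhds (show (0 : ℝ) < 1 / 2 by norm_num)))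
  have hb : ∀ y ∈ Metric.ball x 1, ‖y‖ ≤ R := by
    intro y hy
    rw [mem_ball_iff_norm] at hy
    have := norm_le_norm_add_norm_sub' y x
    linarith
  have hsmall : ∀ y ∈ Metric.ball x 1, ∀ m, ‖q ^ (m + M) * y‖ ≤ ‖q‖ ^ (m + M) * R := by
    intro y hy m
    rw [norm_mul, norm_pow]
    gcongr
    exact hb y hy
  have hhalf : ∀ y ∈ Metric.ball x 1, ∀ m, ‖q ^ (m + M) * y‖ ≤ 1 / 2 := fun y hy m =>
    (hsmall y hy m).trans (hM _ (by omega))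
  have hsum : Summable (fun m : ℕ => (((m + M : ℕ) : ℝ) + 1) * (C * (‖q‖ ^ (m + M) * R))) := by
    have := (summable_nat_add_iff M).2 ((summable_lin ‖q‖ (norm_nonneg q) hq1 1).mul_left (C * R))
    refine this.congr (fun m => ?_)
    push_cast
    ring
  have hbd : ∀ m, ∀ y ∈ Metric.ball x 1, ‖w (m + M) * LL j 0 (q ^ (m + M) * y)‖ ≤
      (((m + M : ℕ) : ℝ) + 1) * (C * (‖q‖ ^ (m + M) * R)) := by
    intro m y hy
    rw [norm_mul]
    gcongr
    · exact hw _
    · refine (hC _ (hhalf y hy m)).trans ?_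
      gcongr
      exact hsmall y hy m
  have htail : DifferentiableOn ℂ (fun y => ∑' m : ℕ, w (m + M) * LL j 0 (q ^ (m + M) * y))
      (Metric.ball x 1) := by
    refine Complex.differentiableOn_tsum_of_summable_norm hsum ?_ Metric.isOpen_ball hbd
    intro m y hy
    apply DifferentiableAt.differentiableWithinAt
    have hne : q ^ (m + M) * y ≠ 1 := by
      intro h
      have := hhalf y hy m
      rw [h, norm_one] at this
      norm_num at this
    exact (DifferentiableAt.comp y (LL_diff j 0 _ hne) (by fun_prop)).const_mul _
  have hfin : DifferentiableAt ℂ (fun y => ∑ m ∈ Finset.range M, w m * LL j 0 (q ^ m * y)) x := by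
    apply DifferentiableAt.fun_sum
    intro m _
    exact (DifferentiableAt.comp x (LL_diff j 0 _ (hx m)) (by fun_prop)).const_mul _
  have hnb := Metric.ball_mem_nhds x (one_pos)
  refine (hfin.add (htail.differentiableAt hnb)).congr_of_eventuallyEq ?_
  filter_upwards [hnb] with y hy
  have hs : Summable (fun m : ℕ => w m * LL j 0 (q ^ m * y)) :=
    (summable_nat_add_iff M).1 (Summable.of_norm_bounded hsum (fun m => hbd m y hy))
  exact (hs.sum_add_tsum_nat_add M).symm

lemma SS_hasSum (j : ℕ) (w : ℕ → ℂ) (hw : ∀ m, ‖w m‖ ≤ (m : ℝ) + 1) (q x : ℂ) (hq1 : ‖q‖ < 1)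
    (hx : ‖x‖ < 1) (d : ℕ → ℂ) (hd : ∀ n : ℕ, HasSum (fun m => w m * (q ^ (n + 1)) ^ m) (d n)) :
    HasSum (fun n : ℕ => ((n : ℂ) + 1) ^ j * x ^ (n + 1) * d n) (SS j w q x) := by
  have hcast : ∀ n : ℕ, ‖((n : ℂ) + 1)‖ = (n : ℝ) + 1 := fun n => by
    have := Complex.norm_natCast (n + 1)
    push_cast at this
    exact this
  let f : ℕ × ℕ → ℂ := fun p => w p.1 * (((p.2 : ℂ) + 1) ^ j * (q ^ p.1 * x) ^ (p.2 + 1))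
  have hf : Summable f := by
    have h1 := summable_lin ‖q‖ (norm_nonneg q) hq1 1
    have h2 := (summable_lin ‖x‖ (norm_nonneg x) hx j)
    have h3 := h1.mul_of_nonneg h2 (fun m => by positivity) (fun m => by positivity)
    refine Summable.of_norm_bounded h3 ?_
    rintro ⟨m, n⟩
    simp only [f, norm_mul, norm_pow, hcast, pow_one]
    have a1 : (‖q‖ ^ m * ‖x‖) ^ (n + 1) ≤ ‖q‖ ^ m * ‖x‖ ^ n := by
      rw [mul_pow]
      have b1 : (‖q‖ ^ m) ^ (n + 1) ≤ ‖q‖ ^ m :=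
        pow_le_of_le_one (by positivity) (pow_le_one₀ (norm_nonneg _) hq1.le) (by omega)
      have b2 : ‖x‖ ^ (n + 1) ≤ ‖x‖ ^ n :=
        pow_le_pow_of_le_one (norm_nonneg _) hx.le (by omega)
      gcongr
    calc _ ≤ ((m : ℝ) + 1) * (((n : ℝ) + 1) ^ j * (‖q‖ ^ m * ‖x‖ ^ n)) := by
            gcongr
            exact hw m
      _ = _ := by ring
  have hrow : ∀ m, HasSum (fun n => f (m, n)) (w m * LL j 0 (q ^ m * x)) := by
    intro m
    have hlt : ‖q ^ m * x‖ < 1 := by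
      rw [norm_mul, norm_pow]
      have : ‖q‖ ^ m ≤ 1 := pow_le_one₀ (norm_nonneg _) hq1.le
      nlinarith [norm_nonneg x]
    have := (LL_hasSum j 0 (q ^ m * x) hlt).mul_left (w m)
    simpa [f] using this
  have hcol : ∀ n, HasSum (fun m => f (m, n)) (((n : ℂ) + 1) ^ j * x ^ (n + 1) * d n) := by
    intro n
    refine hs_congr ((hd n).mul_left (((n : ℂ) + 1) ^ j * x ^ (n + 1))) (fun m => ?_) rfl
    simp only [f, mul_pow, ← pow_mul]
    ring
  have t1 := hf.hasSum.prod_fiberwise hrow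
  have hsw : HasSum (fun p : ℕ × ℕ => f p.swap) (∑' p, f p) :=
    (Equiv.prodComm ℕ ℕ).hasSum_iff.2 hf.hasSum
  have t2 := hsw.prod_fiberwise (f := fun p : ℕ × ℕ => f p.swap) hcol
  have : SS j w q x = ∑' p, f p := t1.tsum_eq
  rw [this]
  exact t2

lemma qpow_lt (q : ℂ) (hq1 : ‖q‖ < 1) (n : ℕ) : ‖q ^ (n + 1)‖ < 1 := by
  rw [norm_pow]
  exact pow_lt_one₀ (norm_nonneg _) hq1 (by omega)

lemma S1_hasSum (j : ℕ) (q x : ℂ) (hq1 : ‖q‖ < 1) (hx : ‖x‖ < 1) :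
    HasSum (fun n : ℕ => ((n : ℂ) + 1) ^ j * x ^ (n + 1) * (1 - q ^ (n + 1))⁻¹)
      (SS j (fun _ => 1) q x) := by
  refine SS_hasSum j _ (fun m => by simp) q x hq1 hx _ fun n => ?_
  simpa using hasSum_geometric_of_norm_lt_one (qpow_lt q hq1 n)

lemma w2_bound (m : ℕ) : ‖((m : ℂ) + 1)‖ ≤ (m : ℝ) + 1 := by
  have := Complex.norm_natCast (m + 1)
  push_cast at this
  exact this.le

lemma S2_hasSum (j : ℕ) (q x : ℂ) (hq1 : ‖q‖ < 1) (hx : ‖x‖ < 1) :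
    HasSum (fun n : ℕ => ((n : ℂ) + 1) ^ j * x ^ (n + 1) * ((1 - q ^ (n + 1)) ^ 2)⁻¹)
      (SS j (fun m => (m : ℂ) + 1) q x) := by
  refine SS_hasSum j _ w2_bound q x hq1 hx _ fun n => ?_
  simpa using hasSum_choose_mul_geometric_of_norm_lt_one 1 (qpow_lt q hq1 n)

lemma P_hasSum (k : ℕ) (q t : ℂ) (hq1 : ‖q‖ < 1) (h1 : ‖t‖ < 1) (h2 : ‖q * t⁻¹‖ < 1) :
    HasSum (fun n : ℕ => (((n : ℂ) + 1) ^ k * t ^ (n + 1) / (1 - q ^ (n + 1)) +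
      (-1 : ℂ) ^ (k + 1) * ((n : ℂ) + 1) ^ k * q ^ (n + 1) * (t⁻¹) ^ (n + 1) /
        (1 - q ^ (n + 1))))
      (SS k (fun _ => 1) q t + (-1 : ℂ) ^ (k + 1) * SS k (fun _ => 1) q (q * t⁻¹)) := by
  refine hs_congr ((S1_hasSum k q t hq1 h1).add
    ((S1_hasSum k q _ hq1 h2).mul_left ((-1 : ℂ) ^ (k + 1)))) (fun n => ?_) rfl
  rw [mul_pow]
  ring

noncomputable def T2 (k : ℕ) (q x : ℂ) : ℂ := SS (2 * k) (fun m => (m : ℂ) + 1) q (q * x)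

lemma H_hasSum (k : ℕ) (q : ℂ) (p : ℂ × ℂ) (hq1 : ‖q‖ < 1) (h1 : ‖q * (p.1 / p.2)‖ < 1)
    (h2 : ‖q * (p.2 / p.1)‖ < 1) (h3 : ‖q * (p.1 * p.2)‖ < 1) (h4 : ‖q * (p.1 * p.2)⁻¹‖ < 1) :
    HasSum (fun n : ℕ => Hterm k q n p)
      (T2 k q (p.1 / p.2) + T2 k q (p.2 / p.1) + T2 k q (p.1 * p.2) + T2 k q (p.1 * p.2)⁻¹) := by
  refine hs_congr ((((S2_hasSum (2 * k) q _ hq1 h1).add (S2_hasSum (2 * k) q _ hq1 h2)).add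
    (S2_hasSum (2 * k) q _ hq1 h3)).add (S2_hasSum (2 * k) q _ hq1 h4)) (fun n => ?_) rfl
  simp only [mul_pow q]
  unfold Hterm
  ring

lemma Hterm_bound (k : ℕ) (q : ℂ) (n : ℕ) (p : ℂ × ℂ) (hq1 : ‖q‖ < 1) (r : ℝ)
    (h1 : ‖q * (p.1 / p.2)‖ ≤ r)
    (h2 : ‖q * (p.2 / p.1)‖ ≤ r) (h3 : ‖q * (p.1 * p.2)‖ ≤ r) (h4 : ‖q * (p.1 * p.2)⁻¹‖ ≤ r) :
    ‖Hterm k q n p‖ ≤ (4 * r / (1 - ‖q‖) ^ 2) * (((n : ℝ) + 1) ^ (2 * k) * r ^ n) := by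
  have e : Hterm k q n p = ((n : ℂ) + 1) ^ (2 * k) * ((q * (p.1 / p.2)) ^ (n + 1) +
     (q * (p.2 / p.1)) ^ (n + 1) + (q * (p.1 * p.2)) ^ (n + 1) + (q * (p.1 * p.2)⁻¹) ^ (n + 1)) /
      (1 - q ^ (n + 1)) ^ 2 := by
    simp only [mul_pow q]
    unfold Hterm
    ring
  have hr : 0 ≤ r := (norm_nonneg _).trans h1
  have hp : ∀ y : ℂ, ‖y‖ ≤ r → ‖y ^ (n + 1)‖ ≤ r ^ (n + 1) := fun y hy => by
    rw [norm_pow]; gcongr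
  have hden : 1 - ‖q‖ ≤ ‖1 - q ^ (n + 1)‖ := by
    have a := norm_sub_norm_le (1 : ℂ) (q ^ (n + 1))
    rw [norm_one, norm_pow] at a
    have b : ‖q‖ ^ (n + 1) ≤ ‖q‖ := pow_le_of_le_one (norm_nonneg _) hq1.le (by omega)
    linarith
  have hpos : 0 < 1 - ‖q‖ := by linarith
  rw [e, norm_div, norm_mul, norm_pow, norm_pow]
  calc _ ≤ ((n : ℝ) + 1) ^ (2 * k) * (4 * r ^ (n + 1)) / (1 - ‖q‖) ^ 2 := by
        gcongr
        · exact w2_bound n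
        · have a1 := hp _ h1
          have a2 := hp _ h2
          have a3 := hp _ h3
          have a4 := hp _ h4
          refine (norm_add₄_le).trans ?_
          linarith
    _ = _ := by ring

noncomputable def Pext (k : ℕ) (q t : ℂ) : ℂ :=
  (1 / (k.factorial : ℂ)) *
    (SS k (fun _ => 1) q t⁻¹ + (-1 : ℂ) ^ (k + 1) * SS k (fun _ => 1) q (q * t))

noncomputable def Gext (k : ℕ) (q : ℂ) (p : ℂ × ℂ) : ℂ :=
  Pext k q p.1 * Pext k q p.2 -
    (T2 k q (p.1 / p.2) + T2 k q (p.2 / p.1) + T2 k q (p.1 * p.2) + T2 k q (p.1 * p.2)⁻¹)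

lemma Pext_diff (k : ℕ) (q t : ℂ) (hq1 : ‖q‖ < 1) (ht : t ≠ 0) (h1 : ∀ m : ℕ, q ^ m * t⁻¹ ≠ 1)
    (h2 : ∀ m : ℕ, q ^ m * (q * t) ≠ 1) : DifferentiableAt ℂ (Pext k q) t := by
  have a1 := SS_diff k (fun _ => 1) (fun m => by simp) q _ hq1 h1
  have a2 := SS_diff k (fun _ => 1) (fun m => by simp) q _ hq1 h2
  have b1 : DifferentiableAt ℂ (fun t => SS k (fun _ => 1) q t⁻¹) t :=
    DifferentiableAt.comp t a1 (differentiableAt_inv ht)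
  have b2 : DifferentiableAt ℂ (fun t => SS k (fun _ => 1) q (q * t)) t :=
    DifferentiableAt.comp t a2 (by fun_prop)
  unfold Pext
  fun_prop

lemma T2_diff (k : ℕ) (q x : ℂ) (hq1 : ‖q‖ < 1)
    (h2 : ∀ m : ℕ, q ^ m * (q * x) ≠ 1) : DifferentiableAt ℂ (T2 k q) x := by
  have a2 := SS_diff (2 * k) (fun m => (m : ℂ) + 1) w2_bound q _ hq1 h2
  exact DifferentiableAt.comp x a2 (by fun_prop)

lemma Gext_diff (k : ℕ) (q : ℂ) (p : ℂ × ℂ) (hq1 : ‖q‖ < 1) (hp1 : p.1 ≠ 0) (hp2 : p.2 ≠ 0)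
    (h1 : ∀ m : ℕ, q ^ m * p.1⁻¹ ≠ 1) (h2 : ∀ m : ℕ, q ^ m * (q * p.1) ≠ 1)
    (h3 : ∀ m : ℕ, q ^ m * p.2⁻¹ ≠ 1) (h4 : ∀ m : ℕ, q ^ m * (q * p.2) ≠ 1)
    (h5 : ∀ m : ℕ, q ^ m * (q * (p.1 / p.2)) ≠ 1) (h6 : ∀ m : ℕ, q ^ m * (q * (p.2 / p.1)) ≠ 1)
    (h7 : ∀ m : ℕ, q ^ m * (q * (p.1 * p.2)) ≠ 1)
    (h8 : ∀ m : ℕ, q ^ m * (q * (p.1 * p.2)⁻¹) ≠ 1) :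
    DifferentiableAt ℂ (Gext k q) p := by
  have h12 : p.1 * p.2 ≠ 0 := mul_ne_zero hp1 hp2
  have a1 : DifferentiableAt ℂ (fun p : ℂ × ℂ => Pext k q p.1) p :=
    DifferentiableAt.comp (g := Pext k q) p (Pext_diff k q _ hq1 hp1 h1 h2) differentiableAt_fst
  have a2 : DifferentiableAt ℂ (fun p : ℂ × ℂ => Pext k q p.2) p :=
    DifferentiableAt.comp (g := Pext k q) p (Pext_diff k q _ hq1 hp2 h3 h4) differentiableAt_snd
  have a3 : DifferentiableAt ℂ (fun p : ℂ × ℂ => T2 k q (p.1 / p.2)) p :=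
    DifferentiableAt.comp (g := T2 k q) p (T2_diff k q _ hq1 h5) (by fun_prop (disch := assumption))
  have a4 : DifferentiableAt ℂ (fun p : ℂ × ℂ => T2 k q (p.2 / p.1)) p :=
    DifferentiableAt.comp (g := T2 k q) p (T2_diff k q _ hq1 h6) (by fun_prop (disch := assumption))
  have a5 : DifferentiableAt ℂ (fun p : ℂ × ℂ => T2 k q (p.1 * p.2)) p :=
    DifferentiableAt.comp (g := T2 k q) p (T2_diff k q _ hq1 h7) (by fun_prop (disch := assumption))
  have a6 : DifferentiableAt ℂ (fun p : ℂ × ℂ => T2 k q (p.1 * p.2)⁻¹) p :=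
    DifferentiableAt.comp (g := T2 k q) p (T2_diff k q _ hq1 h8) (by fun_prop (disch := assumption))
  unfold Gext
  fun_prop

lemma qpow_mul_ne_one (q x : ℂ) (hq1 : ‖q‖ < 1) (hx : ‖x‖ < 1) (m : ℕ) : q ^ m * x ≠ 1 := by
  intro h
  have h2 : ‖q ^ m * x‖ = 1 := by rw [h, norm_one]
  rw [norm_mul, norm_pow] at h2
  have : ‖q‖ ^ m ≤ 1 := pow_le_one₀ (norm_nonneg _) hq1.le
  nlinarith [norm_nonneg x]

lemma Omega_facts (q : ℂ) (p : ℂ × ℂ) (hp : p ∈ Omega q) :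
    p.1 ≠ 0 ∧ p.2 ≠ 0 ∧ ‖p.1⁻¹‖ < 1 ∧ ‖p.2⁻¹‖ < 1 ∧ ‖q * p.1‖ < 1 ∧ ‖q * p.2‖ < 1 ∧
    ‖q * (p.1 / p.2)‖ < 1 ∧ ‖q * (p.2 / p.1)‖ < 1 ∧ ‖q * (p.1 * p.2)‖ < 1 ∧
    ‖q * (p.1 * p.2)⁻¹‖ < 1 := by
  obtain ⟨h1, h2, h3, h4, h5, h6⟩ := hp
  have z1 : p.1 ≠ 0 := norm_pos_iff.1 (by linarith)
  have z2 : p.2 ≠ 0 := norm_pos_iff.1 (by linarith)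
  refine ⟨z1, z2, ?_, ?_, ?_, ?_, ?_, ?_, ?_, ?_⟩
  · rw [norm_inv]; exact inv_lt_one_of_one_lt₀ h1
  · rw [norm_inv]; exact inv_lt_one_of_one_lt₀ h2
  · rw [norm_mul] at h3
    nlinarith [norm_nonneg (q * p.1)]
  · rw [mul_right_comm, norm_mul] at h3
    nlinarith [norm_nonneg (q * p.2)]
  · rwa [← mul_div_assoc]
  · rwa [← mul_div_assoc]
  · rwa [← mul_assoc]
  · rwa [← div_eq_mul_inv]

lemma Hfun_eq (k : ℕ) (q : ℂ) (hq1 : ‖q‖ < 1) (p : ℂ × ℂ) (hp : p ∈ Omega q) :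
    Gext k q p = Hfun k q p := by
  obtain ⟨z1, z2, a1, a2, b1, b2, c1, c2, c3, c4⟩ := Omega_facts q p hp
  unfold Gext Hfun Pfun Pext
  rw [(H_hasSum k q p hq1 c1 c2 c3 c4).tsum_eq,
    (P_hasSum k q _ hq1 a1 (by rwa [inv_inv])).tsum_eq,
    (P_hasSum k q _ hq1 a2 (by rwa [inv_inv])).tsum_eq, inv_inv, inv_inv]

lemma H_unif (k : ℕ) (q : ℂ) (hq1 : ‖q‖ < 1) :
    TendstoLocallyUniformlyOn
      (fun N : ℕ => fun p : ℂ × ℂ => ∑ n ∈ Finset.range N, Hterm k q n p)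
      (fun p : ℂ × ℂ => ∑' n : ℕ, Hterm k q n p) Filter.atTop (Omega q) := by
  intro u hu p hp
  obtain ⟨z1, z2, a1, a2, b1, b2, c1, c2, c3, c4⟩ := Omega_facts q p hp
  have h12 : p.1 * p.2 ≠ 0 := mul_ne_zero z1 z2
  obtain ⟨r, hr, hr1⟩ := exists_between (max_lt (max_lt c1 c2) (max_lt c3 c4))
  simp only [max_lt_iff] at hr
  obtain ⟨⟨d1, d2⟩, d3, d4⟩ := hr
  have hr0 : 0 ≤ r := (norm_nonneg _).trans d1.le
  have e1 : ContinuousAt (fun p : ℂ × ℂ => ‖q * (p.1 / p.2)‖) p := by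
    fun_prop (disch := assumption)
  have e2 : ContinuousAt (fun p : ℂ × ℂ => ‖q * (p.2 / p.1)‖) p := by
    fun_prop (disch := assumption)
  have e3 : ContinuousAt (fun p : ℂ × ℂ => ‖q * (p.1 * p.2)‖) p := by
    fun_prop (disch := assumption)
  have e4 : ContinuousAt (fun p : ℂ × ℂ => ‖q * (p.1 * p.2)⁻¹‖) p := by
    fun_prop (disch := assumption)
  let V : Set (ℂ × ℂ) := {p | ‖q * (p.1 / p.2)‖ ≤ r ∧ ‖q * (p.2 / p.1)‖ ≤ r ∧
    ‖q * (p.1 * p.2)‖ ≤ r ∧ ‖q * (p.1 * p.2)⁻¹‖ ≤ r}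
  have hV : V ∈ nhds p := by
    filter_upwards [e1.eventually (ge_mem_nhds d1), e2.eventually (ge_mem_nhds d2),
      e3.eventually (ge_mem_nhds d3), e4.eventually (ge_mem_nhds d4)] with y y1 y2 y3 y4
    exact ⟨y1, y2, y3, y4⟩
  have hs := (summable_lin r hr0 hr1 (2 * k)).mul_left (4 * r / (1 - ‖q‖) ^ 2)
  have hU := tendstoUniformlyOn_tsum_nat (s := V) (f := fun n p => Hterm k q n p) hs
    (fun n y hy => Hterm_bound k q n y hq1 r hy.1 hy.2.1 hy.2.2.1 hy.2.2.2)
  exact ⟨V, mem_nhdsWithin_of_mem_nhds hV, hU u hu⟩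

/-- **Convergence and analytic continuation of the 2-point building blocks `H_k`.**
For `k ≥ 1` and `0 < |q| < 1`: all constituent series of `H_k` converge absolutely at
each point of `Ω`, the correction series converges locally uniformly on `Ω`, `H_k` is
holomorphic on `Ω`, and it extends to a holomorphic function on the open set `U`
(in particular `H_k` has a meromorphic extension to `ℂ× × ℂ×`). -/
theorem stmt11 (k : ℕ) (hk : 1 ≤ k) (q : ℂ) (hq0 : 0 < ‖q‖) (hq1 : ‖q‖ < 1) :
    (∀ p ∈ Omega q,
      (Summable fun n : ℕ =>
        ‖((n : ℂ) + 1) ^ k * (p.1⁻¹) ^ (n + 1) / (1 - q ^ (n + 1)) +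
          (-1 : ℂ) ^ (k + 1) * ((n : ℂ) + 1) ^ k * q ^ (n + 1) * ((p.1⁻¹)⁻¹) ^ (n + 1) /
            (1 - q ^ (n + 1))‖) ∧
      (Summable fun n : ℕ =>
        ‖((n : ℂ) + 1) ^ k * (p.2⁻¹) ^ (n + 1) / (1 - q ^ (n + 1)) +
          (-1 : ℂ) ^ (k + 1) * ((n : ℂ) + 1) ^ k * q ^ (n + 1) * ((p.2⁻¹)⁻¹) ^ (n + 1) /
            (1 - q ^ (n + 1))‖) ∧
      (Summable fun n : ℕ => ‖Hterm k q n p‖)) ∧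
    TendstoLocallyUniformlyOn
      (fun N : ℕ => fun p : ℂ × ℂ => ∑ n ∈ Finset.range N, Hterm k q n p)
      (fun p : ℂ × ℂ => ∑' n : ℕ, Hterm k q n p) Filter.atTop (Omega q) ∧
    DifferentiableOn ℂ (Hfun k q) (Omega q) ∧
    ∃ G : ℂ × ℂ → ℂ, DifferentiableOn ℂ G (Udom q) ∧ ∀ p ∈ Omega q, G p = Hfun k q p := by
  refine ⟨fun p hp => ?_, H_unif k q hq1, ?_, Gext k q, ?_, Hfun_eq k q hq1⟩
  · obtain ⟨z1, z2, a1, a2, b1, b2, c1, c2, c3, c4⟩ := Omega_facts q p hp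
    exact ⟨(P_hasSum k q _ hq1 a1 (by rwa [inv_inv])).summable.norm,
      (P_hasSum k q _ hq1 a2 (by rwa [inv_inv])).summable.norm,
      (H_hasSum k q p hq1 c1 c2 c3 c4).summable.norm⟩
  · refine DifferentiableOn.congr (f := Gext k q) ?_ (fun p hp => (Hfun_eq k q hq1 p hp).symm)
    intro p hp
    obtain ⟨z1, z2, a1, a2, b1, b2, c1, c2, c3, c4⟩ := Omega_facts q p hp
    exact (Gext_diff k q p hq1 z1 z2 (qpow_mul_ne_one q _ hq1 a1) (qpow_mul_ne_one q _ hq1 b1)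
      (qpow_mul_ne_one q _ hq1 a2) (qpow_mul_ne_one q _ hq1 b2) (qpow_mul_ne_one q _ hq1 c1)
      (qpow_mul_ne_one q _ hq1 c2) (qpow_mul_ne_one q _ hq1 c3)
      (qpow_mul_ne_one q _ hq1 c4)).differentiableWithinAt
  · rintro p ⟨z1, z2, h1, h2, h3, h4⟩
    have hq : q ≠ 0 := norm_pos_iff.1 hq0
    have key1 : ∀ (m : ℕ) (x : ℂ), x ≠ 0 → q ^ m * x⁻¹ = 1 → x = q ^ (m : ℤ) := by
      intro m x hx h
      rw [zpow_natCast]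
      field_simp at h
      exact h.symm
    have key2 : ∀ (m : ℕ) (x : ℂ), q ^ m * (q * x) = 1 → x = q ^ (-((m : ℤ) + 1)) := by
      intro m x h
      rw [zpow_neg, ← Nat.cast_succ, zpow_natCast, Nat.succ_eq_add_one, pow_succ]
      apply eq_inv_of_mul_eq_one_right
      rw [← h]; ring
    have key3 : ∀ (m : ℕ) (x : ℂ), q ^ m * (q * x⁻¹) = 1 → x = q ^ ((m : ℤ) + 1) := by
      intro m x h
      have := key2 m _ h
      rw [zpow_neg] at this
      exact inv_injective this
    refine (Gext_diff k q p hq1 z1 z2 (fun m h => h1 _ (key1 m _ z1 h))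
      (fun m h => h1 _ (key2 m _ h)) (fun m h => h2 _ (key1 m _ z2 h))
      (fun m h => h2 _ (key2 m _ h)) (fun m h => h4 _ (by omega) (key2 m _ h))
      (fun m h => h4 ((m : ℤ) + 1) (by omega) (key3 m _ (by rwa [inv_div])))
      (fun m h => h3 _ (key2 m _ h))
      (fun m h => h3 _ (key3 m _ h))).differentiableWithinAt
end

section
/- Fix any family B_{m,l} ∈ ℂ((q)) indexed by (m,l) ∈ ℤ². Suppose F = ∑_{m,l∈ℤ} a_{m,l}(q) t₁^{m+1/2} t₂^{l+1/2} and F′ = ∑_{m,l∈ℤ} a′_{m,l}(q) t₁^{m+1/2} t₂^{l+1/2} are two formal series with all coefficients in ℂ[[q]], both symmetric (a_{m,l} = a_{l,m} and a′_{m,l} = a′_{l,m} for all m,l) and both satisfying the same inhomogeneous q-difference equation F(qt₁, t₂) + q^{1/2} t₁ t₂ F(t₁, t₂) = B, i.e. q^m a_{m,l} + a_{m−1,l−1} = B_{m,l} and q^m a′_{m,l} + a′_{m−1,l−1} = B_{m,l} for all m, l ∈ ℤ. Then F = F′, i.e. a_{m,l} = a′_{m,l} for all m, l. In particular, the Bloch–Okounkov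 2-point equation G(qt₁,t₂) + q^{1/2} t₁ t₂ G(t₁,t₂) = δ_{1/2}(qt₁) G(t₂) + q^{1/2} t₁ t₂ G(t₁t₂) has at most one symmetric solution with coefficients in ℂ[[q]]. -/
/-- **Uniqueness for the symmetric inhomogeneous 2-point `q`-difference equation.**
Two formal series `F = ∑ a_{m,l} t₁^{m+1/2} t₂^{l+1/2}`, `F' = ∑ a'_{m,l} t₁^{m+1/2} t₂^{l+1/2}`
with coefficients in `ℂ[[q]]`, both symmetric and both satisfying
`F(qt₁,t₂) + q^{1/2} t₁ t₂ F(t₁,t₂) = B` (coefficientwise: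
`q^m a_{m,l} + a_{m-1,l-1} = B_{m,l}` in `ℂ((q))`), coincide.  In particular the
Bloch–Okounkov 2-point equation has at most one symmetric solution with coefficients in
`ℂ[[q]]`. -/
theorem stmt14 (B : ℤ → ℤ → LaurentSeries ℂ)
    (a a' : ℤ → ℤ → PowerSeries ℂ)
    (hsym : ∀ m l : ℤ, a m l = a l m)
    (hsym' : ∀ m l : ℤ, a' m l = a' l m)
    (ha : ∀ m l : ℤ,
      (HahnSeries.single m (1 : ℂ) : LaurentSeries ℂ) * ((a m l : LaurentSeries ℂ))
          + ((a (m - 1) (l - 1) : LaurentSeries ℂ)) = B m l)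
    (ha' : ∀ m l : ℤ,
      (HahnSeries.single m (1 : ℂ) : LaurentSeries ℂ) * ((a' m l : LaurentSeries ℂ))
          + ((a' (m - 1) (l - 1) : LaurentSeries ℂ)) = B m l) :
    ∀ m l : ℤ, a m l = a' m l := by
  have inj : ∀ x y : PowerSeries ℂ, (x : LaurentSeries ℂ) = (y : LaurentSeries ℂ) → x = y :=
    fun x y h => HahnSeries.ofPowerSeries_injective h
  obtain ⟨c, hc⟩ : ∃ c : ℤ → ℤ → LaurentSeries ℂ, ∀ m l, c m l =
    (a m l : LaurentSeries ℂ) - (a' m l : LaurentSeries ℂ) := ⟨_, fun _ _ => rfl⟩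
  have hs : ∀ m l, c m l = c l m := by
    intro m l
    rw [hc, hc, hsym m l, hsym' m l]
  have he : ∀ m l, (HahnSeries.single m (1 : ℂ) : LaurentSeries ℂ) * c m l
      = - c (m - 1) (l - 1) := by
    intro m l
    rw [hc, hc, mul_sub]
    linear_combination ha m l - ha' m l
  have hneg : ∀ m l k : ℤ, k < 0 → (c m l).coeff k = 0 := by
    intro m l k hk
    rw [hc, HahnSeries.coeff_sub, PowerSeries.coeff_coe, PowerSeries.coeff_coe, if_pos hk,
      if_pos hk, sub_zero]
  have hrec : ∀ m k : ℤ, (c (m - 1) (m - 1)).coeff k = - (c m m).coeff (k - m) := by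
    intro m k
    have h := congrArg (fun x : LaurentSeries ℂ => x.coeff k) (he m m)
    simp only [HahnSeries.coeff_neg] at h
    have h2 := HahnSeries.coeff_single_mul_add (r := (1 : ℂ)) (x := c m m) (a := k - m) (b := m)
    rw [sub_add_cancel, one_mul] at h2
    rw [← h2, h, neg_neg]
  have h1 : ∀ n : ℕ, ∀ m k : ℤ, 0 ≤ m → k < n → (c m m).coeff k = 0 := by
    intro n
    induction n with
    | zero => intro m k _ hk; exact hneg _ _ _ (by simpa using hk)
    | succ n ih =>
      intro m k hm hk
      have h := hrec (m + 1) k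
      rw [add_sub_cancel_right] at h
      rw [h, ih (m + 1) _ (by omega) (by push_cast at hk; omega), neg_zero]
  have h2 : ∀ n : ℕ, ∀ m k : ℤ, -(n : ℤ) ≤ m → (c m m).coeff k = 0 := by
    intro n
    induction n with
    | zero => intro m k hm; exact h1 (k.toNat + 1) m k (by simpa using hm) (by omega)
    | succ n ih =>
      intro m k hm
      have h := hrec (m + 1) k
      rw [add_sub_cancel_right] at h
      rw [h, ih (m + 1) _ (by push_cast at hm; omega), neg_zero]
  intro m l
  apply inj
  rw [← sub_eq_zero, ← hc]
  by_cases hml : m = l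
  · subst hml
    ext k
    exact h2 m.natAbs m k (by omega)
  · have h3 : ((HahnSeries.single m (1 : ℂ) : LaurentSeries ℂ) - HahnSeries.single l (1 : ℂ))
        * c m l = 0 := by
      have e1 := he m l
      have e2 := he l m
      rw [hs l m, hs (l - 1) (m - 1)] at e2
      linear_combination e1 - e2
    rcases mul_eq_zero.mp h3 with h | h
    · exfalso
      have h4 := congrArg (fun x : LaurentSeries ℂ => x.coeff m) (sub_eq_zero.mp h)
      simp [HahnSeries.coeff_single_of_ne hml] at h4
    · exact h
end

section
/- Let k, l ∈ ℤ with k ≠ l. The double series A_{k,l} = ∑_{m,n≥0} (−1)^{m+n} q^{(n+m+1)(n+m+2)/2 − k(m+1) − l(n+1)} is a well-defined formal Laurent series in q (for each integer j only finitely many pairs (m,n) ∈ ℕ² satisfy (n+m+1)(n+m+2)/2 − k(m+1) − l(n+1) = j, and the occurring exponents are bounded below), and it lies in ℤ[[q]]: for every negative integer j, the signed count ∑ { (−1)^{m+n} : (m,n) ∈ ℕ², (n+m+1)(n+m+2)/2 − k(m+1) − l(n+1) = j } equals 0. -/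
/-- The exponent `(n+m+1)(n+m+2)/2 - k(m+1) - l(n+1)` of `q` attached to the lattice point
`(m,n) ∈ ℕ²` in the double series `A_{k,l}`. -/
def Aexp (k l : ℤ) (p : ℕ × ℕ) : ℤ :=
  (((p.2 : ℤ) + (p.1 : ℤ) + 1) * ((p.2 : ℤ) + (p.1 : ℤ) + 2)) / 2 -
    k * ((p.1 : ℤ) + 1) - l * ((p.2 : ℤ) + 1)

/-- The coefficient of `q^j` in
`A_{k,l} = ∑_{m,n≥0} (-1)^{m+n} q^{(n+m+1)(n+m+2)/2 - k(m+1) - l(n+1)}`: the signed count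
of lattice points `(m,n)` with the given exponent. -/
noncomputable def Acoeff (k l j : ℤ) : ℂ :=
  ∑ᶠ p : ℕ × ℕ, if Aexp k l p = j then (-1 : ℂ) ^ (p.1 + p.2) else 0

theorem two_Aexp (k l : ℤ) (p : ℕ × ℕ) :
    2 * Aexp k l p = ((p.2 : ℤ) + p.1 + 1) * ((p.2 : ℤ) + p.1 + 2)
      - 2 * k * (p.1 + 1) - 2 * l * (p.2 + 1) := by
  have h : (2 : ℤ) ∣ ((p.2 : ℤ) + p.1 + 1) * ((p.2 : ℤ) + p.1 + 2) := by
    have := Int.even_mul_succ_self ((p.2 : ℤ) + p.1 + 1)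
    have h2 := this.two_dvd
    rwa [show (p.2 : ℤ) + p.1 + 1 + 1 = (p.2 : ℤ) + p.1 + 2 by ring] at h2
  have := Int.mul_ediv_cancel' h
  unfold Aexp
  linear_combination this

theorem Aexp_lower (k l : ℤ) (p : ℕ × ℕ) :
    ((p.2 : ℤ) + p.1 + 2) * ((p.2 : ℤ) + p.1 + 1 - 2 * (|k| + |l|)) ≤ 2 * Aexp k l p := by
  rw [two_Aexp]
  have h1 : k ≤ |k| + |l| := by have := le_abs_self k; have := abs_nonneg l; linarith
  have h2 : l ≤ |k| + |l| := by have := le_abs_self l; have := abs_nonneg k; linarith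
  have ha : (0 : ℤ) ≤ (p.1 : ℤ) + 1 := by positivity
  have hb : (0 : ℤ) ≤ (p.2 : ℤ) + 1 := by positivity
  have e1 := mul_le_mul_of_nonneg_right h1 ha
  have e2 := mul_le_mul_of_nonneg_right h2 hb
  linarith

theorem A_bdd (k l : ℤ) : ∃ j₀ : ℤ, ∀ p : ℕ × ℕ, j₀ ≤ Aexp k l p := by
  refine ⟨-(2 * (|k| + |l|) + 1) ^ 2, fun p => ?_⟩
  have h := Aexp_lower k l p
  set s : ℤ := (p.2 : ℤ) + p.1 + 2
  have hs : (p.2 : ℤ) + p.1 + 1 = s - 1 := by simp only [s]; ring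
  rw [hs] at h
  set M := |k| + |l|
  nlinarith [sq_nonneg (s - (2 * M + 1)), sq_nonneg (s), sq_nonneg (2 * M + 1), sq_nonneg (2 * s - (2 * M + 1))]

theorem A_fin (k l j : ℤ) : {p : ℕ × ℕ | Aexp k l p = j}.Finite := by
  set B : ℤ := 2 * (|k| + |l|) + 2 * |j| + 2 with hB
  refine ((Set.finite_Iic B.toNat).prod (Set.finite_Iic B.toNat)).subset ?_
  intro p hp
  have h := Aexp_lower k l p
  rw [Set.mem_ofPred_eq] at hp
  rw [hp] at h
  have key : (p.2 : ℤ) + p.1 ≤ B := by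
    by_contra hc
    push Not at hc
    have h0 : 2 * |j| + 3 ≤ (p.2 : ℤ) + p.1 + 1 - 2 * (|k| + |l|) := by linarith
    have h1 : (1 : ℤ) ≤ (p.2 : ℤ) + p.1 + 2 := by omega
    have hj := abs_nonneg j
    have hj2 := le_abs_self j
    nlinarith
  simp only [Set.mem_prod, Set.mem_Iic]
  omega

/-- sign of parity -/
noncomputable def sgn15 (s : ℤ) : ℂ := if Even s then 1 else -1

theorem sgn15_refl (s k : ℤ) : sgn15 s + sgn15 (2 * k + 1 - s) = 0 := by
  unfold sgn15
  by_cases h : Even s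
  · have : ¬ Even (2 * k + 1 - s) := by rw [Int.even_iff] at *; omega
    simp [h, this]
  · have : Even (2 * k + 1 - s) := by rw [Int.even_iff] at *; omega
    simp [h, this]

theorem refl15_ne (s k : ℤ) : 2 * k + 1 - s ≠ s := by omega

/-- equation -/
def Eq15 (k l j : ℤ) (p : ℤ × ℤ) : Prop :=
  (p.1 + p.2) * (p.1 + p.2 - 1) - 2 * k * p.1 - 2 * l * p.2 = 2 * j

def I15 (k l j : ℤ) : Set (ℤ × ℤ) := {p | 1 ≤ p.2 ∧ 1 ≤ p.1 + p.2 ∧ Eq15 k l j p}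
def J15 (k l j : ℤ) : Set (ℤ × ℤ) := {p | p.1 ≤ 0 ∧ 1 ≤ p.1 + p.2 ∧ Eq15 k l j p}

theorem I15_lt {k l j : ℤ} (h : l < k) (hj : j < 0) {p : ℤ × ℤ} (hp : p ∈ I15 k l j) :
    p.1 + p.2 < 2 * k + 1 := by
  obtain ⟨h1, h2, h3⟩ := hp
  unfold Eq15 at h3
  by_contra hc
  push Not at hc
  nlinarith [mul_nonneg (show 0 ≤ p.1 + p.2 by linarith) (show 0 ≤ p.1 + p.2 - (2 * k + 1) by linarith),
    mul_nonneg (show 0 ≤ k - l by linarith) (show 0 ≤ p.2 by linarith)]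

theorem J15_lt {k l j : ℤ} (h : l < k) (hj : j < 0) {p : ℤ × ℤ} (hp : p ∈ J15 k l j) :
    p.1 + p.2 < 2 * l + 1 := by
  obtain ⟨h1, h2, h3⟩ := hp
  unfold Eq15 at h3
  by_contra hc
  push Not at hc
  nlinarith [mul_nonneg (show 0 ≤ p.1 + p.2 by linarith) (show 0 ≤ p.1 + p.2 - (2 * l + 1) by linarith),
    mul_nonneg (show 0 ≤ k - l by linarith) (show 0 ≤ -p.1 by linarith)]

theorem I15_fin {k l j : ℤ} (h : l < k) (hj : j < 0) : (I15 k l j).Finite := by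
  refine ((Set.finite_Icc (-(2 * k * (2 * k + 1))) (2 * k)).prod
    (Set.finite_Icc 1 (2 * k * (2 * k + 1)))).subset ?_
  intro p hp
  have hlt := I15_lt h hj hp
  obtain ⟨h1, h2, h3⟩ := hp
  unfold Eq15 at h3
  have hb : p.2 ≤ 2 * k * (2 * k + 1) := by
    nlinarith [mul_nonneg (show 0 ≤ k - l - 1 by linarith) (show 0 ≤ p.2 by linarith),
      mul_nonneg (show 0 ≤ p.1 + p.2 by linarith) (show 0 ≤ p.1 + p.2 - 1 by linarith),
      mul_nonneg (show 0 ≤ k by linarith) (show 0 ≤ 2 * k - (p.1 + p.2) by linarith)]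
  simp only [Set.mem_prod, Set.mem_Icc]
  refine ⟨⟨?_, ?_⟩, h1, hb⟩ <;> linarith

theorem J15_sub (k l j : ℤ) : J15 k l j ⊆ I15 k l j := by
  rintro p ⟨h1, h2, h3⟩
  exact ⟨by linarith, h2, h3⟩

theorem I15_sum {k l j : ℤ} (h : l < k) (hj : j < 0) :
    ∑ p ∈ (I15_fin h hj).toFinset, sgn15 (p.1 + p.2) = 0 := by
  refine Finset.sum_involution (fun p _ => (2 * k + 1 - (p.1 + p.2) - p.2, p.2)) ?_ ?_ ?_ ?_
  · intro p hp
    simpa using sgn15_refl (p.1 + p.2) k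
  · intro p hp _ he
    have := congrArg Prod.fst he
    simp only at this
    omega
  · intro p hp
    rw [Set.Finite.mem_toFinset] at hp ⊢
    have hlt := I15_lt h hj hp
    obtain ⟨h1, h2, h3⟩ := hp
    refine ⟨h1, by simp only; linarith, ?_⟩
    unfold Eq15 at *
    simp only
    linear_combination h3
  · intro p hp
    ext <;> simp

theorem J15_sum {k l j : ℤ} (h : l < k) (hj : j < 0) :
    ∑ p ∈ ((I15_fin h hj).subset (J15_sub k l j)).toFinset, sgn15 (p.1 + p.2) = 0 := by
  refine Finset.sum_involution (fun p _ => (p.1, 2 * l + 1 - (p.1 + p.2) - p.1)) ?_ ?_ ?_ ?_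
  · intro p hp
    simpa using sgn15_refl (p.1 + p.2) l
  · intro p hp _ he
    have := congrArg Prod.snd he
    simp only at this
    omega
  · intro p hp
    rw [Set.Finite.mem_toFinset] at hp ⊢
    have hlt := J15_lt h hj hp
    obtain ⟨h1, h2, h3⟩ := hp
    refine ⟨h1, by simp only; linarith, ?_⟩
    unfold Eq15 at *
    simp only
    linear_combination h3
  · intro p hp
    ext <;> simp

theorem Acoeff_eq_sum (k l j : ℤ) :
    Acoeff k l j = ∑ p ∈ (A_fin k l j).toFinset, (-1 : ℂ) ^ (p.1 + p.2) := by
  unfold Acoeff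
  rw [finsum_eq_sum_of_support_subset (s := (A_fin k l j).toFinset)]
  · refine Finset.sum_congr rfl fun p hp => ?_
    rw [Set.Finite.mem_toFinset] at hp
    exact if_pos hp
  · intro p hp
    rw [Set.Finite.coe_toFinset]
    by_contra hc
    exact hp (if_neg hc)

theorem Acoeff_zero_of_lt {k l j : ℤ} (h : l < k) (hj : j < 0) : Acoeff k l j = 0 := by
  classical
  rw [Acoeff_eq_sum]
  have hsub : ((I15_fin h hj).subset (J15_sub k l j)).toFinset ⊆ (I15_fin h hj).toFinset := by
    intro p hp
    rw [Set.Finite.mem_toFinset] at hp ⊢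
    exact J15_sub _ _ _ hp
  have hd := Finset.sum_sdiff (f := fun p : ℤ × ℤ => sgn15 (p.1 + p.2)) hsub
  rw [I15_sum h hj, J15_sum h hj, add_zero] at hd
  rw [← hd]
  refine Finset.sum_bij (fun p _ => ((p.1 : ℤ) + 1, (p.2 : ℤ) + 1)) ?_ ?_ ?_ ?_
  · intro p hp
    rw [Set.Finite.mem_toFinset, Set.mem_ofPred_eq] at hp
    have h2 := two_Aexp k l p
    rw [Finset.mem_sdiff, Set.Finite.mem_toFinset, Set.Finite.mem_toFinset]
    refine ⟨⟨by simp only; omega, by simp only; omega, ?_⟩, fun hJ => ?_⟩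
    · unfold Eq15
      simp only
      rw [hp] at h2
      linear_combination -h2
    · have := hJ.1
      simp only at this
      omega
  · intro p _ p' _ he
    have h1 := congrArg Prod.fst he
    have h2 := congrArg Prod.snd he
    simp only at h1 h2
    ext <;> omega
  · intro p hp
    rw [Finset.mem_sdiff, Set.Finite.mem_toFinset, Set.Finite.mem_toFinset] at hp
    obtain ⟨⟨h1, h2, h3⟩, h4⟩ := hp
    have h5 : 1 ≤ p.1 := by
      by_contra hc
      exact h4 ⟨by omega, h2, h3⟩
    have e1 : (((p.1 - 1).toNat : ℕ) : ℤ) = p.1 - 1 := Int.toNat_of_nonneg (by omega)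
    have e2 : (((p.2 - 1).toNat : ℕ) : ℤ) = p.2 - 1 := Int.toNat_of_nonneg (by omega)
    refine ⟨((p.1 - 1).toNat, (p.2 - 1).toNat), ?_, ?_⟩
    · rw [Set.Finite.mem_toFinset, Set.mem_ofPred_eq]
      have h6 := two_Aexp k l ((p.1 - 1).toNat, (p.2 - 1).toNat)
      simp only [e1, e2] at h6
      unfold Eq15 at h3
      have : 2 * Aexp k l ((p.1 - 1).toNat, (p.2 - 1).toNat) = 2 * j := by
        linear_combination h6 + h3
      omega
    · ext <;> simp only [e1, e2] <;> ring
  · intro p _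
    unfold sgn15
    have : Even ((p.1 : ℤ) + 1 + ((p.2 : ℤ) + 1)) ↔ Even (p.1 + p.2) := by
      rw [Int.even_iff, Nat.even_iff]; omega
    simp only [this]
    split_ifs with he
    · exact he.neg_one_pow
    · exact (Nat.not_even_iff_odd.mp he).neg_one_pow

theorem Acoeff_swap (k l j : ℤ) : Acoeff k l j = Acoeff l k j := by
  unfold Acoeff
  rw [← finsum_comp_equiv (Equiv.prodComm ℕ ℕ)]
  refine finsum_congr fun p => ?_
  have : Aexp k l (Equiv.prodComm ℕ ℕ p) = Aexp l k p := by
    have h1 := two_Aexp k l (Equiv.prodComm ℕ ℕ p)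
    have h2 := two_Aexp l k p
    simp only [Equiv.prodComm_apply, Prod.fst_swap, Prod.snd_swap] at h1 ⊢
    have : 2 * Aexp k l p.swap = 2 * Aexp l k p := by linear_combination h1 - h2
    omega
  rw [this]
  simp [add_comm]

/-- **Integrality of the 2-point coefficients** (formula (3.47) of the paper).
For `k ≠ l` the double series `A_{k,l}` is a well-defined formal Laurent series in `q`
(each exponent is attained by only finitely many lattice points and the exponents are
bounded below), and it lies in `ℤ[[q]]`: for every negative `j` the signed count of
lattice points with exponent `j` vanishes, and every coefficient is an integer. -/
theorem stmt15 (k l : ℤ) (hkl : k ≠ l) :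
    (∀ j : ℤ, {p : ℕ × ℕ | Aexp k l p = j}.Finite) ∧
    (∃ j₀ : ℤ, ∀ p : ℕ × ℕ, j₀ ≤ Aexp k l p) ∧
    (∀ j : ℤ, j < 0 → Acoeff k l j = 0) ∧
    (∀ j : ℤ, ∃ z : ℤ, Acoeff k l j = (z : ℂ)) := by
  refine ⟨A_fin k l, A_bdd k l, fun j hj => ?_, fun j => ?_⟩
  · rcases lt_or_gt_of_ne hkl with h | h
    · rw [Acoeff_swap]
      exact Acoeff_zero_of_lt h hj
    · exact Acoeff_zero_of_lt h hj
  · refine ⟨∑ p ∈ (A_fin k l j).toFinset, (-1 : ℤ) ^ (p.1 + p.2), ?_⟩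
    rw [Acoeff_eq_sum]
    push_cast
    rfl
end
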